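/- arXiv:0706.4101 — 3 statements merged into one kernel-verified Lean document; each statement's English description precedes it below -/
import Mathlib

section
/- Every K4-free graph G on n vertices can be made bipartite by deleting at most n^2/9 edges; that is, e(G) - b(G) ≤ n^2/9. -/
open Finset

namespace SimpleGraph

variable {V : Type*} [Fintype V] [DecidableEq V] (G : SimpleGraph V) [DecidableRel G.Adj]

/-- The number of edges of `G` crossing the cut `(S, Sᶜ)`. -/
def cutSize (S : Finset V) : ℕ :=
  ((S ×ˢ Sᶜ).filter fun p => G.Adj p.1 p.2).card

/-- `b(G)`: the maximum number of edges in a bipartite subgraph of `G`,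
equivalently the maximum over vertex subsets `S` of the number of edges
between `S` and its complement. -/
def maxCut : ℕ := Finset.univ.sup fun S : Finset V => G.cutSize S

/-- The number of edges of `G` with both endpoints in `S`. -/
def spanEdges (S : Finset V) : ℕ :=
  (G.edgeFinset.filter fun e => e ∈ S.sym2).card

end SimpleGraph

namespace K4Cut

/-- real-valued adjacency indicator -/
noncomputable def ad {V : Type*} (G : SimpleGraph V) [DecidableRel G.Adj] (x y : V) : ℝ :=
  if G.Adj x y then 1 else 0

/-- the quadratic form of a matrix -/
noncomputable def Q {V : Type*} [Fintype V] (a : V → V → ℝ) (s : V → ℝ) : ℝ :=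
  ∑ x, ∑ y, a x y * (s x * s y)

set_option maxHeartbeats 1000000 in
/-- Final numerical contradiction. -/
lemma numeric {V : Type*} [Fintype V] (n m q : ℝ) (hn : 0 < n) (hc : (Fintype.card V : ℝ) = n)
    (d T : V → ℝ) (hd0 : ∀ v, 0 ≤ d v) (hd1 : ∀ v, d v ≤ 1) (hm : ∑ v, d v = n * m)
    (hP : ∀ v, 4 / 9 - m ≤ d v ^ 2 - 3 * T v)
    (h1 : n * (4 / 9 - m) < n * m - 4 * ∑ v, d v ^ 2 + 4 * ∑ v, T v)
    (hq : q = √(1 / 2 - 3 * m / 4))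
    (h3 : 3 * ∑ v, T v * d v ≤ (2 - q) * ∑ v, T v) : False := by
  have hcard : ∑ _v : V, (1 : ℝ) = n := by simp [hc]
  have hPs : n * (4 / 9 - m) ≤ ∑ v, d v ^ 2 - 3 * ∑ v, T v := by
    have := Finset.sum_le_sum (fun v (_ : v ∈ Finset.univ) => hP v)
    rw [Finset.sum_const, nsmul_eq_mul, Finset.card_univ, hc, Finset.sum_sub_distrib,
      ← Finset.mul_sum] at this
    exact this
  have hsq : n * m ^ 2 ≤ ∑ v, d v ^ 2 := by
    have := Finset.sum_le_sum (fun v (_ : v ∈ Finset.univ) =>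
      (by nlinarith [sq_nonneg (d v - m)] : 2 * m * d v - m ^ 2 * 1 ≤ d v ^ 2))
    rw [Finset.sum_sub_distrib, ← Finset.mul_sum, ← Finset.mul_sum, hm, hcard] at this
    nlinarith
  have hmr : 28 / 9 < 10 * m - 8 * m ^ 2 := by
    have : n * (28 / 9) < n * (10 * m - 8 * m ^ 2) := by nlinarith
    exact lt_of_mul_lt_mul_left this hn.le
  have hm1 : 7 / 12 < m := by nlinarith
  have hm2 : m < 2 / 3 := by nlinarith
  have hq0 : 0 ≤ q := hq ▸ Real.sqrt_nonneg _
  have hq2 : q ^ 2 = 1 / 2 - 3 * m / 4 := by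
    rw [hq, Real.sq_sqrt]; linarith
  obtain ⟨y, rfl⟩ : ∃ y, q = y / 4 := ⟨4 * q, by ring⟩
  have hmy : m = 2 / 3 - y ^ 2 / 12 := by linarith
  have hy0 : 0 < y := by
    rcases (show 0 ≤ y by linarith).eq_or_lt with h | h
    · subst h; linarith
    · exact h
  have hy1 : y < 1 := by nlinarith
  set a : ℝ := 2 / 3 - y / 12 with ha
  have h3' : ∑ v, T v * (d v - a) ≤ 0 := by
    simp_rw [mul_sub]
    rw [Finset.sum_sub_distrib, ← Finset.sum_mul, ha]
    linarith
  set ℓ : ℝ := 4 / 9 - m with hℓ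
  -- pointwise inequality
  set C : ℝ := 2 * m * (m - a) + (m ^ 2 - ℓ) + 4 * (1 - a) * m with hC
  set G0 : ℝ := (m ^ 2 - ℓ) * (m - a) + 2 * (1 - a) * m ^ 2 with hG0
  have key : ∀ v, G0 + C * (d v - m) - 2 * (1 - a) * d v ^ 2
      - (1 - a) * (d v ^ 2 - 3 * T v - ℓ) ≤ 3 * (T v * (d v - a)) := by
    intro v
    have e1 : 0 ≤ (1 - d v) * (d v ^ 2 - 3 * T v - ℓ) :=
      mul_nonneg (by linarith [hd1 v]) (by linarith [hP v])
    have e2 : 0 ≤ (d v - m) ^ 2 * (d v + 2 * m - a + 2 * (1 - a)) :=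
      mul_nonneg (sq_nonneg _) (by linarith [hd0 v])
    have e3 : 3 * (T v * (d v - a)) - (G0 + C * (d v - m) - 2 * (1 - a) * d v ^ 2
      - (1 - a) * (d v ^ 2 - 3 * T v - ℓ)) = (1 - d v) * (d v ^ 2 - 3 * T v - ℓ)
        + (d v - m) ^ 2 * (d v + 2 * m - a + 2 * (1 - a)) := by
      rw [hG0, hC]; ring
    linarith
  have keys := Finset.sum_le_sum (fun v (_ : v ∈ Finset.univ) => key v)
  have hL : ∑ v, (G0 + C * (d v - m) - 2 * (1 - a) * d v ^ 2
      - (1 - a) * (d v ^ 2 - 3 * T v - ℓ)) = n * G0 - 3 * (1 - a) * ∑ v, d v ^ 2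
        + 3 * (1 - a) * ∑ v, T v + n * (1 - a) * ℓ := by
    have : ∀ v, (G0 + C * (d v - m) - 2 * (1 - a) * d v ^ 2
      - (1 - a) * (d v ^ 2 - 3 * T v - ℓ)) = (G0 - C * m + (1 - a) * ℓ) * 1 + C * d v
        - 3 * (1 - a) * d v ^ 2 + 3 * (1 - a) * T v := by intro v; ring
    simp_rw [this]
    rw [Finset.sum_add_distrib, Finset.sum_sub_distrib, Finset.sum_add_distrib,
      ← Finset.mul_sum, ← Finset.mul_sum, ← Finset.mul_sum, ← Finset.mul_sum, hm, hcard]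
    ring
  rw [hL, ← Finset.mul_sum] at keys
  have ha1 : 0 < 1 - a := by rw [ha]; linarith
  have h1' : (1 - a) * (n * ℓ) ≤ (1 - a) * (n * m - 4 * ∑ v, d v ^ 2 + 4 * ∑ v, T v) :=
    mul_le_mul_of_nonneg_left h1.le ha1.le
  have hfin : n * (G0 - (1 - a) * (3 * m / 4 - 7 * ℓ / 4)) ≤ 0 := by nlinarith
  have hpos : 0 < G0 - (1 - a) * (3 * m / 4 - 7 * ℓ / 4) := by
    have : G0 - (1 - a) * (3 * m / 4 - 7 * ℓ / 4) = y * (1 - y) / 12 *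
      ((m ^ 2 + m - 4 / 9) - (1 / 3 + y / 12) * y * (1 + y) / 6) := by
      rw [hG0, ha, hℓ, hmy]; ring
    rw [this]
    apply mul_pos
    · have : 0 < 1 - y := by linarith
      positivity
    · have : (1 / 3 + y / 12) * y * (1 + y) ≤ (1 / 3 + 1 / 12) * 1 * (1 + 1) := by
        gcongr
      nlinarith
  nlinarith

lemma Q_shift {V : Type*} [Fintype V] [DecidableEq V] (a : V → V → ℝ) (hs : ∀ x y, a x y = a y x)
    (h0 : ∀ x, a x x = 0) (s : V → ℝ) (z : V) (t : ℝ) :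
    Q a (fun x => s x + if x = z then t else 0) = Q a s + t * (2 * ∑ y, a z y * s y) := by
  unfold Q
  have : ∀ x y, a x y * ((s x + if x = z then t else 0) * (s y + if y = z then t else 0))
      = a x y * (s x * s y) + (if x = z then a x y * t * s y else 0)
        + (if y = z then a x y * t * s x else 0)
        + (if x = z then (if y = z then a x y * t * t else 0) else 0) := by
    intro x y; split_ifs <;> ring
  simp_rw [this, Finset.sum_add_distrib]
  have e1 : ∑ x, ∑ y, (if x = z then a x y * t * s y else 0) = t * ∑ y, a z y * s y := by
    rw [Finset.sum_comm, Finset.mul_sum]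
    refine Finset.sum_congr rfl fun y _ => ?_
    rw [Finset.sum_ite_eq' Finset.univ z]; simp; ring
  have e2 : ∑ x, ∑ y, (if y = z then a x y * t * s x else 0) = t * ∑ y, a z y * s y := by
    rw [Finset.mul_sum]
    refine Finset.sum_congr rfl fun x _ => ?_
    rw [Finset.sum_ite_eq' Finset.univ z]; simp; rw [hs x z]; ring
  have e3 : ∑ x, ∑ y, (if x = z then (if y = z then a x y * t * t else 0) else 0) = 0 := by
    refine Finset.sum_eq_zero fun x _ => Finset.sum_eq_zero fun y _ => ?_
    split_ifs with h h'
    · subst h; subst h'; simp [h0]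
    · rfl
    · rfl
  rw [e1, e2, e3]; ring

lemma round {V : Type*} [Fintype V] [DecidableEq V] (a : V → V → ℝ) (hs : ∀ x y, a x y = a y x)
    (h0 : ∀ x, a x x = 0) (W : Finset V) : ∀ s : V → ℝ, (∀ x, -1 ≤ s x ∧ s x ≤ 1) →
    (∀ x, x ∉ W → s x = 1 ∨ s x = -1) → ∃ s' : V → ℝ, (∀ x, s' x = 1 ∨ s' x = -1) ∧
      Q a s' ≤ Q a s := by
  induction W using Finset.induction_on with
  | empty => intro s _ h; exact ⟨s, fun x => h x (by simp), le_rfl⟩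
  | insert z W hz ih =>
    intro s hb h
    have main : ∀ t : ℝ, (s z + t = 1 ∨ s z + t = -1) → t * (2 * ∑ y, a z y * s y) ≤ 0 →
        ∃ s' : V → ℝ, (∀ x, s' x = 1 ∨ s' x = -1) ∧ Q a s' ≤ Q a s := by
      intro t ht hle
      obtain ⟨s', h1, h2⟩ := ih (fun x => s x + if x = z then t else 0) (by
        intro x
        by_cases hx : x = z
        · subst hx; simp only [if_true]; rcases ht with h | h <;> rw [h] <;> norm_num
        · simpa [hx] using hb x) (by
        intro x hx
        by_cases hx' : x = z
        · subst hx'; simpa using ht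
        · simpa [hx'] using h x (by simp [hx, hx']))
      rw [Q_shift a hs h0] at h2
      exact ⟨s', h1, by linarith⟩
    rcases le_total 0 (2 * ∑ y, a z y * s y) with hl | hl
    · exact main (-1 - s z) (Or.inr (by ring)) (mul_nonpos_of_nonpos_of_nonneg
        (by linarith [(hb z).1]) hl)
    · exact main (1 - s z) (Or.inl (by ring)) (mul_nonpos_of_nonneg_of_nonpos
        (by linarith [(hb z).2]) hl)

section graph
set_option linter.unusedSectionVars false
variable {V : Type*} [Fintype V] [DecidableEq V] (G : SimpleGraph V) [DecidableRel G.Adj]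

lemma ad_symm (x y : V) : ad G x y = ad G y x := by simp [ad, G.adj_comm]
lemma ad_self (x : V) : ad G x x = 0 := by simp [ad]
lemma ad_nonneg (x y : V) : 0 ≤ ad G x y := by unfold ad; split_ifs <;> norm_num
lemma ad_le (x y : V) : ad G x y ≤ 1 := by unfold ad; split_ifs <;> norm_num
lemma ad_01 (x y : V) : ad G x y = 0 ∨ ad G x y = 1 := by unfold ad; split_ifs <;> simp

lemma ad_K4 (hG : G.CliqueFree 4) (u v x y : V) :
    ad G u v * ad G x y * ad G v x * ad G v y * ad G u x * ad G u y = 0 := by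
  by_contra h
  simp only [mul_eq_zero, not_or] at h
  obtain ⟨⟨⟨⟨⟨h1, h2⟩, h3⟩, h4⟩, h5⟩, h6⟩ := h
  have k : ∀ p q, ¬ ad G p q = 0 → G.Adj p q := by
    intro p q h; unfold ad at h; by_contra h'; simp [h'] at h
  refine hG {u, v, x, y} ?_
  have h3c : G.IsNClique 3 {v, x, y} :=
    SimpleGraph.is3Clique_triple_iff.2 ⟨k _ _ h3, k _ _ h4, k _ _ h2⟩
  refine h3c.insert ?_
  intro b hb
  simp only [Finset.mem_insert, Finset.mem_singleton] at hb
  rcases hb with rfl | rfl | rfl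
  · exact k _ _ h1
  · exact k _ _ h5
  · exact k _ _ h6

lemma sum_ad : ∑ x, ∑ y, ad G x y = 2 * (G.edgeFinset.card : ℝ) := by
  have := G.sum_degrees_eq_twice_card_edges
  rw [← Nat.cast_inj (R := ℝ)] at this
  push_cast at this
  rw [← this]
  refine Finset.sum_congr rfl fun x _ => ?_
  simp [ad, ← SimpleGraph.card_neighborFinset_eq_degree, SimpleGraph.neighborFinset_eq_filter]

lemma cut_Q (s : V → ℝ) (h : ∀ x, s x = 1 ∨ s x = -1) :
    2 * (G.edgeFinset.card : ℝ) - 4 * G.maxCut ≤ Q (ad G) s := by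
  have h1 : G.cutSize (Finset.univ.filter fun x => s x = 1) ≤ G.maxCut :=
    Finset.le_sup (f := fun S : Finset V => G.cutSize S) (Finset.mem_univ _)
  have h2 : 4 * (G.cutSize (Finset.univ.filter fun x => s x = 1) : ℝ)
      = ∑ x, ∑ y, ad G x y * ((1 + s x) * (1 - s y)) := by
    unfold SimpleGraph.cutSize
    rw [Finset.card_filter, Finset.sum_product]
    push_cast
    rw [Finset.sum_filter, Finset.mul_sum]
    refine Finset.sum_congr rfl fun x _ => ?_
    have hm1 : ¬ ((-1 : ℝ) = 1) := by norm_num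
    rcases h x with hx | hx
    · rw [if_pos hx, ← Finset.sum_filter_add_sum_filter_not Finset.univ (fun y => s y = 1)
        (fun y => ad G x y * ((1 + s x) * (1 - s y)))]
      rw [Finset.sum_eq_zero (s := Finset.univ.filter fun y => s y = 1), zero_add, Finset.mul_sum]
      · refine Finset.sum_congr (by ext; simp) fun y hy => ?_
        have : s y = -1 := (h y).resolve_left (by simpa using hy)
        rw [hx, this]; unfold ad; split_ifs <;> norm_num
      · intro y hy
        have : s y = 1 := by simpa using hy
        rw [this]; ring
    · rw [if_neg (by rw [hx]; exact hm1), hx]; simp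
  have h3 : ∑ x, ∑ y, ad G x y * ((1 + s x) * (1 - s y))
      = 2 * (G.edgeFinset.card : ℝ) - Q (ad G) s := by
    have : ∀ x y, ad G x y * ((1 + s x) * (1 - s y)) = ad G x y - ad G x y * (s x * s y)
      + ad G x y * s x - ad G x y * s y := by intros; ring
    simp_rw [this, Finset.sum_sub_distrib, Finset.sum_add_distrib, Finset.sum_sub_distrib]
    rw [sum_ad]
    have : ∑ x, ∑ y, ad G x y * s x = ∑ x, ∑ y, ad G x y * s y := by
      rw [Finset.sum_comm]
      simp_rw [ad_symm G]
    rw [this]; unfold Q; ring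
  have : (G.cutSize (Finset.univ.filter fun x => s x = 1) : ℝ) ≤ G.maxCut := by exact_mod_cast h1
  linarith

lemma turan_nat {n k : ℕ} (h : k ≤ (n ^ 2 - (n % 3) ^ 2) * (3 - 1) / (2 * 3) + (n % 3).choose 2) :
    3 * k ≤ n ^ 2 := by
  have h3 : n % 3 < 3 := Nat.mod_lt _ (by norm_num)
  have h4 : (n % 3) ≤ n := Nat.mod_le _ _
  have h5 : (n % 3) ^ 2 ≤ n ^ 2 := Nat.pow_le_pow_left h4 2
  have h6 : 3 * (n % 3).choose 2 ≤ (n % 3) ^ 2 := by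
    generalize n % 3 = r at *
    interval_cases r <;> simp [Nat.choose]
  omega

lemma turan_Q (hG : G.CliqueFree 4) (R : Finset V) :
    Q (ad G) (fun x => if x ∈ R then 1 else 0) ≤ 2 / 3 * (R.card : ℝ) ^ 2 := by
  have hc : (G.induce (R : Set V)).CliqueFree 4 := hG.comap ⟨(SimpleGraph.Embedding.induce (R : Set V)).toCopy⟩
  have h1 := turan_nat (SimpleGraph.CliqueFree.card_edgeFinset_le (r := 3) hc)
  have h2 := sum_ad (G.induce (R : Set V))
  have h3 : Q (ad G) (fun x => if x ∈ R then 1 else 0) =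
      ∑ x, ∑ y, ad (G.induce (R : Set V)) x y := by
    unfold Q
    have : ∀ x y : V, ad G x y * ((if x ∈ R then (1 : ℝ) else 0) * (if y ∈ R then 1 else 0))
      = if x ∈ R then (if y ∈ R then ad G x y else 0) else 0 := by
      intros; split_ifs <;> simp
    simp_rw [this]
    have e : ∀ f : V → ℝ, ∑ x, (if x ∈ R then f x else 0) = ∑ x : (R : Set V), f x := by
      intro f
      rw [← Finset.sum_filter, Finset.filter_mem_eq_inter, Finset.univ_inter]
      exact (Finset.sum_coe_sort R f).symm
    have e' : ∀ x : V, (∑ y, if x ∈ R then (if y ∈ R then ad G x y else 0) else 0)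
      = if x ∈ R then ∑ y, (if y ∈ R then ad G x y else 0) else 0 := by
      intro x; split_ifs <;> simp
    simp_rw [e', e]
    rfl
  rw [h3, h2]
  have h4 : Fintype.card (R : Set V) = R.card := by simp
  rw [h4] at h1
  have : (3 * ((G.induce (R : Set V)).edgeFinset.card : ℝ)) ≤ (R.card : ℝ) ^ 2 := by
    exact_mod_cast h1
  linarith

end graph

section graph2
set_option linter.unusedSectionVars false
variable {V : Type*} [Fintype V] [DecidableEq V] (G : SimpleGraph V) [DecidableRel G.Adj]

/-- degree as a real number -/
noncomputable def dg (v : V) : ℝ := ∑ x, ad G v x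

/-- twice the number of edges in the neighbourhood of `v` -/
noncomputable def tr (v : V) : ℝ := ∑ x, ∑ y, ad G v x * ad G v y * ad G x y

lemma sum_ad_dg : ∑ v, ∑ x, ad G v x * dg G x = ∑ x, dg G x ^ 2 := by
  rw [Finset.sum_comm]
  refine Finset.sum_congr rfl fun x _ => ?_
  rw [← Finset.sum_mul, sq]
  congr 1
  unfold dg
  simp_rw [ad_symm G x]

lemma boundA (L : ℝ) (H : ∀ s : V → ℝ, (∀ x, -1 ≤ s x ∧ s x ≤ 1) → L < Q (ad G) s) (v : V) :
    L < ∑ x, dg G x - 4 * ∑ x, ad G v x * dg G x + 4 * tr G v := by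
  have h := H (fun x => 1 - 2 * ad G v x) (fun x => by
    constructor <;> linarith [ad_nonneg G v x, ad_le G v x])
  refine h.trans_eq ?_
  unfold Q
  have : ∀ x y, ad G x y * ((1 - 2 * ad G v x) * (1 - 2 * ad G v y)) =
    ad G x y - 2 * (ad G v x * ad G x y) - 2 * (ad G v y * ad G x y)
      + 4 * (ad G v x * ad G v y * ad G x y) := by intros; ring
  simp_rw [this, Finset.sum_add_distrib, Finset.sum_sub_distrib, ← Finset.mul_sum]
  have e : ∑ x, ∑ y, ad G v y * ad G x y = ∑ x, ad G v x * ∑ y, ad G x y := by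
    rw [Finset.sum_comm]
    refine Finset.sum_congr rfl fun x _ => ?_
    rw [← Finset.mul_sum]
    simp_rw [ad_symm G x]
  rw [e]
  unfold tr dg
  ring

lemma boundB (hG : G.CliqueFree 4) (L : ℝ)
    (H : ∀ s : V → ℝ, (∀ x, -1 ≤ s x ∧ s x ≤ 1) → L < Q (ad G) s) (v : V) :
    L ≤ dg G v ^ 2 - 3 * tr G v := by
  set g : V → ℝ := fun x => ∑ y, ad G v y * ad G x y with hg
  have htr : ∑ x, ad G v x * g x = tr G v := by
    unfold tr
    refine Finset.sum_congr rfl fun x _ => ?_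
    rw [hg, Finset.mul_sum]
    exact Finset.sum_congr rfl fun y _ => by ring
  have h1 : ∀ u, ad G v u * L ≤ ad G v u * (tr G v - 4 * ∑ x, ad G v x * ad G u x * g x) := by
    intro u
    rcases ad_01 G v u with h0 | h0
    · simp [h0]
    have h := H (fun x => ad G v x * (2 * ad G u x - 1)) (fun x => by
      rcases ad_01 G v x with h | h <;> rcases ad_01 G u x with h' | h' <;> rw [h, h'] <;> norm_num)
    rw [h0, one_mul, one_mul]
    refine h.le.trans_eq ?_
    unfold Q
    have : ∀ x y, ad G x y * ((ad G v x * (2 * ad G u x - 1)) * (ad G v y * (2 * ad G u y - 1))) =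
        ad G v x * ad G v y * ad G x y - 2 * (ad G v x * ad G u x * (ad G v y * ad G x y))
        - 2 * (ad G v y * ad G u y * (ad G v x * ad G y x)) := by
      intro x y
      have k := ad_K4 G hG u v x y
      rw [ad_symm G u v, h0, one_mul] at k
      rw [ad_symm G y x]
      linear_combination 4 * k
    simp_rw [this, Finset.sum_sub_distrib, ← Finset.mul_sum]
    have e : ∑ x, ∑ y, ad G v y * ad G u y * (ad G v x * ad G y x)
        = ∑ x, ad G v x * ad G u x * ∑ y, ad G v y * ad G x y := by
      rw [Finset.sum_comm]
      simp_rw [← Finset.mul_sum]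
    rw [e]
    unfold tr
    rw [hg]
    ring
  have h2 := Finset.sum_le_sum (fun u (_ : u ∈ Finset.univ) => h1 u)
  have h3 : ∑ u, ad G v u * (tr G v - 4 * ∑ x, ad G v x * ad G u x * g x)
      = dg G v * tr G v - 4 * ∑ x, ad G v x * g x ^ 2 := by
    simp_rw [mul_sub, Finset.sum_sub_distrib, ← Finset.sum_mul]
    congr 1
    simp_rw [Finset.mul_sum]
    rw [Finset.sum_comm]
    refine Finset.sum_congr rfl fun x _ => ?_
    rw [sq, hg]
    simp only [Finset.mul_sum, Finset.sum_mul]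
    rw [Finset.sum_comm]
    refine Finset.sum_congr rfl fun y _ => Finset.sum_congr rfl fun z _ => ?_
    rw [ad_symm G x z, ad_symm G x y]
    ring_nf
    try rw [ad_symm G x z]
    try ring
  rw [← Finset.sum_mul, h3] at h2
  have h4 : dg G v * tr G v - dg G v ^ 3 / 4 ≤ ∑ x, ad G v x * g x ^ 2 := by
    have := Finset.sum_le_sum (fun x (_ : x ∈ Finset.univ) =>
      mul_le_mul_of_nonneg_left (by nlinarith [sq_nonneg (g x - dg G v / 2)] :
        dg G v * g x - dg G v ^ 2 / 4 ≤ g x ^ 2) (ad_nonneg G v x))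
    refine le_trans (le_of_eq ?_) this
    simp_rw [mul_sub, Finset.sum_sub_distrib, ← Finset.sum_mul]
    rw [← htr, Finset.mul_sum]
    congr 1
    · exact Finset.sum_congr rfl fun x _ => by ring
    · unfold dg; ring
  have hd : 0 ≤ dg G v := Finset.sum_nonneg fun x _ => ad_nonneg G v x
  rcases hd.eq_or_lt with h0 | hpos
  · have hz : ∀ x, ad G v x = 0 := by
      intro x
      exact (Finset.sum_eq_zero_iff_of_nonneg (fun x _ => ad_nonneg G v x)).1 h0.symm x
        (Finset.mem_univ x)
    have : tr G v = 0 := by unfold tr; simp [hz]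
    rw [this, ← h0]
    have h := H (fun _ => 0) (by intro; norm_num)
    have h' : Q (ad G) (fun _ => 0) = 0 := by simp [Q]
    linarith
  · have h5 : dg G v * L ≤ dg G v * (dg G v ^ 2 - 3 * tr G v) := by
      have : (∑ i, ad G v i) = dg G v := rfl
      rw [this] at h2
      nlinarith
    exact le_of_mul_le_mul_left h5 hpos

lemma boundC (hG : G.CliqueFree 4) (L : ℝ)
    (H : ∀ s : V → ℝ, (∀ x, -1 ≤ s x ∧ s x ≤ 1) → L < Q (ad G) s) (u v w : V)
    (huv : ad G u v = 1) (hvw : ad G v w = 1) (huw : ad G u w = 1) :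
    3 * L + ∑ x, dg G x ≤ 8 / 3 * (2 * Fintype.card V - (dg G u + dg G v + dg G w)) ^ 2 ∧
      0 ≤ 2 * Fintype.card V - (dg G u + dg G v + dg G w) := by
  have hdis : ∀ x, ad G u x * ad G v x * ad G w x = 0 := by
    intro x
    have k := ad_K4 G hG u v w x
    rw [huv, hvw, huw] at k
    linear_combination k
  set α : V → ℝ := fun x => ad G v x * ad G w x with hα
  set β : V → ℝ := fun x => ad G u x * ad G w x with hβ
  set γ : V → ℝ := fun x => ad G u x * ad G v x with hγ
  have hval : ∀ x, (α x = 1 ∧ β x = 0 ∧ γ x = 0) ∨ (α x = 0 ∧ β x = 1 ∧ γ x = 0) ∨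
      (α x = 0 ∧ β x = 0 ∧ γ x = 1) ∨ (α x = 0 ∧ β x = 0 ∧ γ x = 0) := by
    intro x
    have := hdis x
    simp only [hα, hβ, hγ]
    rcases ad_01 G u x with h | h <;> rcases ad_01 G v x with h' | h' <;>
      rcases ad_01 G w x with h'' | h'' <;> rw [h, h', h''] at this ⊢ <;>
      first | (exfalso; norm_num at this; done) | norm_num
  have ind : ∀ p q x y, ad G p q = 1 →
      ad G x y * ((ad G p x * ad G q x) * (ad G p y * ad G q y)) = 0 := by
    intro p q x y hpq
    have k := ad_K4 G hG p q x y
    rw [hpq] at k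
    linear_combination k
  set R : Finset V := Finset.univ.filter fun x => α x + β x + γ x = 0 with hR
  set ρ : V → ℝ := fun x => if x ∈ R then 1 else 0 with hρ
  have hρ' : ∀ x, ρ x = 1 - α x - β x - γ x := by
    intro x
    simp only [hρ, hR, Finset.mem_filter, Finset.mem_univ, true_and]
    rcases hval x with ⟨h1, h2, h3⟩ | ⟨h1, h2, h3⟩ | ⟨h1, h2, h3⟩ | ⟨h1, h2, h3⟩ <;>
      rw [h1, h2, h3] <;> norm_num
  have q1 := H (fun x => 1 - 2 * β x - 2 * γ x) (fun x => by
    rcases hval x with ⟨h1, h2, h3⟩ | ⟨h1, h2, h3⟩ | ⟨h1, h2, h3⟩ | ⟨h1, h2, h3⟩ <;>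
      rw [h2, h3] <;> norm_num)
  have q2 := H (fun x => 1 - 2 * α x - 2 * γ x) (fun x => by
    rcases hval x with ⟨h1, h2, h3⟩ | ⟨h1, h2, h3⟩ | ⟨h1, h2, h3⟩ | ⟨h1, h2, h3⟩ <;>
      rw [h1, h3] <;> norm_num)
  have q3 := H (fun x => 1 - 2 * α x - 2 * β x) (fun x => by
    rcases hval x with ⟨h1, h2, h3⟩ | ⟨h1, h2, h3⟩ | ⟨h1, h2, h3⟩ | ⟨h1, h2, h3⟩ <;>
      rw [h1, h2] <;> norm_num)
  have hsum : Q (ad G) (fun x => 1 - 2 * β x - 2 * γ x) + Q (ad G) (fun x => 1 - 2 * α x - 2 * γ x)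
      + Q (ad G) (fun x => 1 - 2 * α x - 2 * β x) = 4 * Q (ad G) ρ - ∑ x, dg G x := by
    unfold Q dg
    simp_rw [Finset.mul_sum, ← Finset.sum_add_distrib, ← Finset.sum_sub_distrib]
    refine Finset.sum_congr rfl fun x _ => Finset.sum_congr rfl fun y _ => ?_
    rw [hρ' x, hρ' y]
    have k1 : ad G x y * (α x * α y) = 0 := ind v w x y hvw
    have k2 : ad G x y * (β x * β y) = 0 := ind u w x y huw
    have k3 : ad G x y * (γ x * γ y) = 0 := ind u v x y huv
    linear_combination 4 * k1 + 4 * k2 + 4 * k3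
  have hT : Q (ad G) ρ ≤ 2 / 3 * (R.card : ℝ) ^ 2 := turan_Q G hG R
  have hRc : (R.card : ℝ) ≤ 2 * Fintype.card V - (dg G u + dg G v + dg G w) := by
    have e1 : (R.card : ℝ) = ∑ x, ρ x := by simp [hρ]
    have e2 : 2 * (Fintype.card V : ℝ) - (dg G u + dg G v + dg G w)
        = ∑ x, (2 - (ad G u x + ad G v x + ad G w x)) := by
      rw [Finset.sum_sub_distrib, Finset.sum_add_distrib, Finset.sum_add_distrib]
      simp [dg, mul_comm]
    rw [e1, e2]
    refine Finset.sum_le_sum fun x _ => ?_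
    rw [hρ' x]
    have := hdis x
    simp only [hα, hβ, hγ]
    rcases ad_01 G u x with h | h <;> rcases ad_01 G v x with h' | h' <;>
      rcases ad_01 G w x with h'' | h'' <;> rw [h, h', h''] at this ⊢ <;>
      first | (exfalso; norm_num at this; done) | norm_num
  have hR0 : (0 : ℝ) ≤ R.card := Nat.cast_nonneg _
  refine ⟨?_, hR0.trans hRc⟩
  have : (R.card : ℝ) ^ 2 ≤ (2 * Fintype.card V - (dg G u + dg G v + dg G w)) ^ 2 :=
    pow_le_pow_left₀ hR0 hRc 2
  linarith

lemma boundT (M : ℝ) (h : ∀ u v w, ad G u v = 1 → ad G v w = 1 → ad G u w = 1 →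
    dg G u + dg G v + dg G w ≤ M) : 3 * ∑ v, tr G v * dg G v ≤ M * ∑ v, tr G v := by
  have h1 : ∀ u v w, ad G u v * ad G u w * ad G v w * (dg G u + dg G v + dg G w)
      ≤ M * (ad G u v * ad G u w * ad G v w) := by
    intro u v w
    rcases ad_01 G u v with k1 | k1
    · simp [k1]
    rcases ad_01 G v w with k2 | k2
    · simp [k2]
    rcases ad_01 G u w with k3 | k3
    · simp [k3]
    rw [k1, k2, k3]
    linarith [h u v w k1 k2 k3]
  have h2 : ∑ u, ∑ v, ∑ w, ad G u v * ad G u w * ad G v w * (dg G u + dg G v + dg G w)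
      ≤ ∑ u, ∑ v, ∑ w, M * (ad G u v * ad G u w * ad G v w) :=
    Finset.sum_le_sum fun u _ => Finset.sum_le_sum fun v _ => Finset.sum_le_sum fun w _ => h1 u v w
  have e1 : ∑ v, tr G v * dg G v = ∑ u, ∑ v, ∑ w, ad G u v * ad G u w * ad G v w * dg G u := by
    unfold tr
    simp_rw [Finset.sum_mul]
  have e2 : ∑ u, ∑ v, ∑ w, ad G u v * ad G u w * ad G v w * dg G v
      = ∑ v, tr G v * dg G v := by
    rw [Finset.sum_comm, e1]
    refine Finset.sum_congr rfl fun u _ => Finset.sum_congr rfl fun v _ =>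
      Finset.sum_congr rfl fun w _ => ?_
    rw [ad_symm G v u]; ring
  have e3 : ∑ u, ∑ v, ∑ w, ad G u v * ad G u w * ad G v w * dg G w
      = ∑ v, tr G v * dg G v := by
    rw [← e2]
    refine Finset.sum_congr rfl fun u _ => ?_
    rw [Finset.sum_comm]
    refine Finset.sum_congr rfl fun v _ => Finset.sum_congr rfl fun w _ => ?_
    rw [ad_symm G w v]; ring
  have e4 : ∑ u, ∑ v, ∑ w, M * (ad G u v * ad G u w * ad G v w) = M * ∑ v, tr G v := by
    unfold tr
    simp_rw [Finset.mul_sum]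
  rw [e4] at h2
  simp_rw [mul_add, Finset.sum_add_distrib] at h2
  rw [e2, e3, ← e1] at h2
  linarith

end graph2

end K4Cut

/-- Every `K₄`-free graph `G` on `n` vertices can be made bipartite by deleting at
most `n² / 9` edges; that is, `e(G) - b(G) ≤ n² / 9`. -/
theorem K4_free_max_cut {V : Type*} [Fintype V] [DecidableEq V]
    (G : SimpleGraph V) [DecidableRel G.Adj] (hG : G.CliqueFree 4) :
    (G.edgeFinset.card : ℝ) - G.maxCut ≤ (Fintype.card V : ℝ) ^ 2 / 9 := by
  by_contra hcon
  push Not at hcon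
  set n : ℝ := (Fintype.card V : ℝ) with hn
  set E : ℝ := (G.edgeFinset.card : ℝ) with hE
  have hE2 : ∑ x, K4Cut.dg G x = 2 * E := K4Cut.sum_ad G
  set L : ℝ := 4 * n ^ 2 / 9 - 2 * E with hL
  have H : ∀ s : V → ℝ, (∀ x, -1 ≤ s x ∧ s x ≤ 1) → L < K4Cut.Q (K4Cut.ad G) s := by
    intro s hs
    obtain ⟨s', h1, h2⟩ := K4Cut.round (K4Cut.ad G) (K4Cut.ad_symm G) (K4Cut.ad_self G)
      Finset.univ s hs (by simp)
    have h3 := K4Cut.cut_Q G s' h1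
    rw [← hE] at h3
    linarith
  have hn0 : 0 < n := by
    rcases isEmpty_or_nonempty V with h | h
    · have : E = 0 := by
        have : ∑ x, K4Cut.dg G x = 0 := by simp
        linarith
      have h1 : (0 : ℝ) ≤ G.maxCut := Nat.cast_nonneg _
      nlinarith [sq_nonneg n]
    · rw [hn]; exact_mod_cast Fintype.card_pos
  have hA : n * L < n * (2 * E) - 4 * ∑ x, K4Cut.dg G x ^ 2 + 4 * ∑ v, K4Cut.tr G v := by
    have hne : (Finset.univ : Finset V).Nonempty := by
      rw [← Finset.card_pos, Finset.card_univ]; exact Nat.cast_pos.1 hn0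
    have := Finset.sum_lt_sum_of_nonempty hne (fun v _ => K4Cut.boundA G L H v)
    rw [Finset.sum_const, nsmul_eq_mul, Finset.card_univ, Finset.sum_add_distrib,
      Finset.sum_sub_distrib, Finset.sum_const, nsmul_eq_mul, Finset.card_univ,
      ← Finset.mul_sum, ← Finset.mul_sum, K4Cut.sum_ad_dg, hE2] at this
    exact this
  set q : ℝ := √(1 / 2 - 3 * (2 * E / n ^ 2) / 4) with hq
  have hC : ∀ u v w, K4Cut.ad G u v = 1 → K4Cut.ad G v w = 1 → K4Cut.ad G u w = 1 →
      K4Cut.dg G u + K4Cut.dg G v + K4Cut.dg G w ≤ (2 - q) * n := by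
    intro u v w h1 h2 h3
    obtain ⟨k1, k2⟩ := K4Cut.boundC G hG L H u v w h1 h2 h3
    rw [hE2, ← hn] at k1
    rw [← hn] at k2
    set S := K4Cut.dg G u + K4Cut.dg G v + K4Cut.dg G w
    have : q ≤ (2 * n - S) / n := by
      rw [hq]
      apply Real.sqrt_le_iff.2 ⟨by positivity, ?_⟩
      rw [div_pow, le_div_iff₀ (by positivity)]
      have : (1 / 2 - 3 * (2 * E / n ^ 2) / 4) * n ^ 2 = n ^ 2 / 2 - 3 * E / 2 := by
        field_simp
        try ring
      rw [this]
      linarith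
    rw [le_div_iff₀ hn0] at this
    linarith
  have hT := K4Cut.boundT G _ hC
  have hd1 : ∀ v, K4Cut.dg G v ≤ n := by
    intro v
    calc K4Cut.dg G v ≤ ∑ _x : V, (1 : ℝ) := Finset.sum_le_sum fun x _ => K4Cut.ad_le G v x
      _ = n := by simp [hn]
  have hd0 : ∀ v, 0 ≤ K4Cut.dg G v := fun v => Finset.sum_nonneg fun x _ => K4Cut.ad_nonneg G v x
  refine K4Cut.numeric n (2 * E / n ^ 2) q hn0 hn.symm (fun v => K4Cut.dg G v / n)
    (fun v => K4Cut.tr G v / n ^ 2) (fun v => div_nonneg (hd0 v) hn0.le)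
    (fun v => (div_le_one hn0).2 (hd1 v)) ?_ ?_ ?_ hq ?_
  · rw [← Finset.sum_div, hE2]; field_simp
  · intro v
    have := K4Cut.boundB G hG L H v
    have e1 : 4 / 9 - 2 * E / n ^ 2 = L / n ^ 2 := by rw [hL]; field_simp
    have e2 : (K4Cut.dg G v / n) ^ 2 - 3 * (K4Cut.tr G v / n ^ 2)
      = (K4Cut.dg G v ^ 2 - 3 * K4Cut.tr G v) / n ^ 2 := by field_simp
    rw [e1, e2]
    gcongr
  · have e1 : 4 / 9 - 2 * E / n ^ 2 = L / n ^ 2 := by rw [hL]; field_simp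
    simp_rw [div_pow]
    rw [← Finset.sum_div, ← Finset.sum_div, e1]
    have := div_lt_div_of_pos_right hA (show 0 < n ^ 2 by positivity)
    generalize ∑ x, K4Cut.dg G x ^ 2 = A at this ⊢
    generalize ∑ x, K4Cut.tr G x = B at this ⊢
    have e2 : n * (L / n ^ 2) = n * L / n ^ 2 := by ring
    have e3 : n * (2 * E / n ^ 2) - 4 * (A / n ^ 2) + 4 * (B / n ^ 2)
      = (n * (2 * E) - 4 * A + 4 * B) / n ^ 2 := by ring
    rw [e2, e3]
    exact this
  · have e : ∀ v, K4Cut.tr G v / n ^ 2 * (K4Cut.dg G v / n)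
        = (K4Cut.tr G v * K4Cut.dg G v) / n ^ 3 := by intro v; field_simp
    simp_rw [e]
    rw [← Finset.sum_div, ← Finset.sum_div]
    have := div_le_div_of_nonneg_right hT (show 0 ≤ n ^ 3 by positivity)
    generalize ∑ x, K4Cut.tr G x * K4Cut.dg G x = A at this ⊢
    generalize ∑ x, K4Cut.tr G x = B at this ⊢
    have e2 : 3 * (A / n ^ 3) = 3 * A / n ^ 3 := by ring
    have e3 : (2 - q) * (B / n ^ 2) = (2 - q) * n * B / n ^ 3 := by
      clear_value q
      field_simp
    rw [e2, e3]
    exact this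
end

section
/- If G is a K4-free graph on n vertices that cannot be made bipartite by deleting fewer than n^2/9 edges (i.e., e(G) - b(G) ≥ n^2/9), then 3 divides n and G is the complete 3-partite graph with three parts of size n/3 each. -/
open Finset

set_option linter.unusedSectionVars false

section
variable {V : Type*} [Fintype V] [DecidableEq V] (G : SimpleGraph V) [DecidableRel G.Adj]

/-- real adjacency indicator -/
def adjR (x y : V) : ℝ := if G.Adj x y then 1 else 0

/-- quadratic form of the adjacency matrix -/
def qf (s : V → ℝ) : ℝ := ∑ x, ∑ y, adjR G x y * (s x * s y)

lemma adjR_symm (x y : V) : adjR G x y = adjR G y x := by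
  simp [adjR, G.adj_comm]

lemma adjR_self (x : V) : adjR G x x = 0 := by simp [adjR]

lemma adjR_zero_or_one (x y : V) : adjR G x y = 0 ∨ adjR G x y = 1 := by
  unfold adjR; split_ifs <;> simp

lemma adjR_sq (x y : V) : adjR G x y * adjR G x y = adjR G x y := by
  rcases adjR_zero_or_one G x y with h | h <;> simp [h]

lemma sum_adjR : ∑ x, ∑ y, adjR G x y = 2 * (G.edgeFinset.card : ℝ) := by
  have h := G.sum_degrees_eq_twice_card_edges
  have h2 : ∀ x, ∑ y, adjR G x y = (G.degree x : ℝ) := by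
    intro x
    simp only [adjR, Finset.sum_boole, ← G.card_neighborFinset_eq_degree,
      G.neighborFinset_eq_filter]
  simp only [h2]
  exact_mod_cast h

/-- one vertex perturbation -/
lemma qf_update (s : V → ℝ) (r : V) (hr : s r = 0) :
    qf G (Function.update s r 1) + qf G (Function.update s r (-1)) = 2 * qf G s := by
  unfold qf
  rw [← Finset.sum_add_distrib, Finset.mul_sum]
  have key : ∀ x y, adjR G x y * (Function.update s r 1 x * Function.update s r 1 y)
      + adjR G x y * (Function.update s r (-1) x * Function.update s r (-1) y)
      = 2 * (adjR G x y * (s x * s y)) := by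
    intro x y
    by_cases hx : x = r <;> by_cases hy : y = r
    · subst hx; subst hy; simp [adjR_self]
    · subst hx; simp [hy, hr]
    · subst hy; simp [hx, hr]
    · simp [hx, hy]; ring
  refine Finset.sum_congr rfl fun x _ => ?_
  rw [← Finset.sum_add_distrib, Finset.mul_sum]
  exact Finset.sum_congr rfl fun y _ => key x y

lemma qf_sign (s : V → ℝ) (hs : ∀ x, s x = 1 ∨ s x = -1) :
    2 * (G.edgeFinset.card : ℝ) - 4 * G.maxCut ≤ qf G s := by
  classical
  set S : Finset V := Finset.univ.filter fun x => s x = 1 with hS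
  have h1 : G.cutSize S ≤ G.maxCut :=
    Finset.le_sup (f := fun S : Finset V => G.cutSize S) (Finset.mem_univ S)
  have h1' : (G.cutSize S : ℝ) ≤ G.maxCut := by exact_mod_cast h1
  let i : V → ℝ := fun x => if x ∈ S then 1 else 0
  have h2 : (G.cutSize S : ℝ) = ∑ x, ∑ y, adjR G x y * (i x * (1 - i y)) := by
    unfold SimpleGraph.cutSize
    rw [Finset.card_filter]
    push_cast
    rw [Finset.sum_product]
    rw [← Finset.sum_subset (Finset.subset_univ S)]
    · refine Finset.sum_congr rfl fun x hx => ?_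
      rw [← Finset.sum_subset (Finset.subset_univ Sᶜ)]
      · refine Finset.sum_congr rfl fun y hy => ?_
        have hy' : y ∉ S := by simpa using hy
        simp [i, hx, hy', adjR]
      · intro y _ hy
        have hy' : y ∈ S := by simpa using hy
        simp [i, hy']
    · intro x _ hx
      simp [i, hx]
  have h2' : (G.cutSize S : ℝ) = ∑ x, ∑ y, adjR G x y * (i y * (1 - i x)) := by
    rw [h2, Finset.sum_comm]
    refine Finset.sum_congr rfl fun x _ => Finset.sum_congr rfl fun y _ => ?_
    rw [adjR_symm]
  have hsi : ∀ x, s x = 2 * i x - 1 := by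
    intro x
    rcases hs x with h | h
    · have : x ∈ S := by simp [hS, h]
      simp [i, this, h]; norm_num
    · have : x ∉ S := by simp [hS, h]; norm_num
      simp [i, this, h]
  have h3 : qf G s = ∑ x, ∑ y, adjR G x y - 2 * ∑ x, ∑ y, adjR G x y * (i x * (1 - i y))
      - 2 * ∑ x, ∑ y, adjR G x y * (i y * (1 - i x)) := by
    unfold qf
    simp only [Finset.mul_sum, ← Finset.sum_sub_distrib]
    refine Finset.sum_congr rfl fun x _ => Finset.sum_congr rfl fun y _ => ?_
    rw [hsi x, hsi y]; ring
  rw [← h2, ← h2', sum_adjR] at h3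
  linarith

lemma qf_sign_zero (s : V → ℝ) (hs : ∀ x, s x = 1 ∨ s x = -1 ∨ s x = 0) :
    2 * (G.edgeFinset.card : ℝ) - 4 * G.maxCut ≤ qf G s := by
  classical
  induction hk : (Finset.univ.filter fun x => s x = 0).card using Nat.strong_induction_on
    generalizing s with
  | _ k ih =>
    by_cases h0 : ∃ r, s r = 0
    · obtain ⟨r, hr⟩ := h0
      have step : ∀ c : ℝ, (c = 1 ∨ c = -1) →
          2 * (G.edgeFinset.card : ℝ) - 4 * G.maxCut ≤ qf G (Function.update s r c) := by
        intro c hc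
        refine ih _ ?_ (Function.update s r c) ?_ rfl
        · rw [← hk]
          apply Finset.card_lt_card
          rw [Finset.ssubset_iff_of_subset]
          · refine ⟨r, by simp [hr], ?_⟩
            rcases hc with rfl | rfl <;> simp
          · intro x hx
            by_cases hxr : x = r
            · subst hxr; simp [hr]
            · simpa [hxr] using hx
        · intro x
          by_cases hxr : x = r
          · subst hxr; rcases hc with rfl | rfl <;> simp
          · simpa [hxr] using hs x
      have := step 1 (Or.inl rfl)
      have := step (-1) (Or.inr rfl)
      have := qf_update G s r hr
      linarith
    · push Not at h0
      exact qf_sign G s fun x => by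
        rcases hs x with h | h | h
        · exact Or.inl h
        · exact Or.inr h
        · exact absurd h (h0 x)

/-- real degree -/
def dR (x : V) : ℝ := ∑ y, adjR G x y

/-- real codegree -/
def qR (x y : V) : ℝ := ∑ z, adjR G x z * adjR G y z

lemma bound_one_aux (v : V) : qf G (fun x => 1 - 2 * adjR G v x) =
    ∑ x, dR G x - 4 * ∑ x, adjR G v x * dR G x + 4 * ∑ x, adjR G v x * qR G v x := by
  have h1 : qf G (fun x => 1 - 2 * adjR G v x) = ∑ x, ∑ y, adjR G x y
     - 2 * (∑ x, ∑ y, adjR G v x * adjR G x y) - 2 * (∑ x, ∑ y, adjR G v y * adjR G x y)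
     + 4 * ∑ x, ∑ y, adjR G v x * (adjR G v y * adjR G x y) := by
    unfold qf
    simp only [Finset.mul_sum, ← Finset.sum_sub_distrib, ← Finset.sum_add_distrib]
    refine Finset.sum_congr rfl fun x _ => Finset.sum_congr rfl fun y _ => ?_
    ring
  have h2 : ∑ x, ∑ y, adjR G v y * adjR G x y = ∑ x, ∑ y, adjR G v x * adjR G x y := by
    rw [Finset.sum_comm]
    refine Finset.sum_congr rfl fun x _ => Finset.sum_congr rfl fun y _ => ?_
    rw [adjR_symm G y x]
  rw [h1, h2]
  simp only [dR, qR, Finset.mul_sum]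
  simp only [← Finset.mul_sum]
  ring

/-- first bound -/
lemma bound_one (L : ℝ) (hL : ∀ s : V → ℝ, (∀ x, s x = 1 ∨ s x = -1 ∨ s x = 0) → L ≤ qf G s) :
    (Fintype.card V : ℝ) * L ≤ (Fintype.card V : ℝ) * ∑ x, dR G x - 4 * ∑ x, dR G x ^ 2
      + 4 * ∑ v, ∑ x, adjR G v x * qR G v x := by
  have h1 : ∀ v, L ≤ ∑ x, dR G x - 4 * ∑ x, adjR G v x * dR G x
      + 4 * ∑ x, adjR G v x * qR G v x := by
    intro v
    rw [← bound_one_aux]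
    apply hL
    intro x
    rcases adjR_zero_or_one G v x with h | h
    · simp [h]
    · right; left; rw [h]; norm_num
  have h2 := Finset.sum_le_sum fun v (_ : v ∈ Finset.univ) => h1 v
  simp only [Finset.sum_add_distrib, Finset.sum_sub_distrib, ← Finset.mul_sum, Finset.sum_const,
    Finset.card_univ, nsmul_eq_mul] at h2
  have h3 : ∑ v, ∑ x, adjR G v x * dR G x = ∑ x, dR G x ^ 2 := by
    rw [Finset.sum_comm]
    refine Finset.sum_congr rfl fun x _ => ?_
    rw [← Finset.sum_mul, sq]
    congr 1
    exact Finset.sum_congr rfl fun y _ => adjR_symm G y x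
  rw [h3] at h2
  exact h2

lemma no_k4 (hG : G.CliqueFree 4) (a b c d : V) (h1 : G.Adj a b) (h2 : G.Adj a c)
    (h3 : G.Adj a d) (h4 : G.Adj b c) (h5 : G.Adj b d) (h6 : G.Adj c d) : False := by
  refine hG {a, b, c, d} ?_
  rw [SimpleGraph.isNClique_iff]
  constructor
  · rw [SimpleGraph.isClique_iff]
    intro x hx y hy hne
    simp only [Finset.coe_insert, Finset.coe_singleton, Set.mem_insert_iff,
      Set.mem_singleton_iff] at hx hy
    rcases hx with rfl | rfl | rfl | rfl <;> rcases hy with rfl | rfl | rfl | rfl <;>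
      first
      | exact absurd rfl hne
      | assumption
      | (apply SimpleGraph.Adj.symm; assumption)
  · have := h1.ne; have := h2.ne; have := h3.ne; have := h4.ne; have := h5.ne; have := h6.ne
    simp [*]

lemma k4_zero (hG : G.CliqueFree 4) (u v x y : V) :
    adjR G u v * adjR G x y * adjR G v x * adjR G v y * adjR G u x * adjR G u y = 0 := by
  by_contra h
  have hh : G.Adj u v ∧ G.Adj x y ∧ G.Adj v x ∧ G.Adj v y ∧ G.Adj u x ∧ G.Adj u y := by
    simp only [mul_eq_zero, not_or] at h
    simpa [adjR, and_assoc] using h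
  obtain ⟨h1, h2, h3, h4, h5, h6⟩ := hh
  exact no_k4 G hG u v x y h1 h5 h6 h3 h4 h2

lemma bound_two_aux (hG : G.CliqueFree 4) (v : V) :
    ∑ u, adjR G u v * qf G (fun x => adjR G v x * (2 * adjR G u x - 1)) =
    dR G v * ∑ x, adjR G v x * qR G v x - 4 * ∑ x, adjR G v x * qR G v x ^ 2 := by
  have h1 : ∀ u, adjR G u v * qf G (fun x => adjR G v x * (2 * adjR G u x - 1)) =
      adjR G v u * (∑ x, ∑ y, adjR G v x * (adjR G v y * adjR G x y))
      - 2 * ∑ x, ∑ y, adjR G v u * adjR G x u * (adjR G v x * (adjR G v y * adjR G x y))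
      - 2 * ∑ x, ∑ y, adjR G v u * adjR G y u * (adjR G v x * (adjR G v y * adjR G x y)) := by
    intro u
    unfold qf
    simp only [Finset.mul_sum, ← Finset.sum_sub_distrib]
    refine Finset.sum_congr rfl fun x _ => Finset.sum_congr rfl fun y _ => ?_
    have := k4_zero G hG u v x y
    rw [adjR_symm G v u, adjR_symm G x u, adjR_symm G y u]
    linear_combination 4 * this
  have h2 : ∀ u, ∑ x, ∑ y, adjR G v u * adjR G y u * (adjR G v x * (adjR G v y * adjR G x y))
      = ∑ x, ∑ y, adjR G v u * adjR G x u * (adjR G v x * (adjR G v y * adjR G x y)) := by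
    intro u
    rw [Finset.sum_comm]
    refine Finset.sum_congr rfl fun x _ => Finset.sum_congr rfl fun y _ => ?_
    rw [adjR_symm G y x]; ring
  simp only [h1, h2, Finset.sum_sub_distrib, ← Finset.sum_mul, ← Finset.mul_sum]
  have h3 : ∑ u, ∑ x, adjR G v u * adjR G x u * (adjR G v x * ∑ y, adjR G v y * adjR G x y)
      = ∑ x, adjR G v x * qR G v x ^ 2 := by
    rw [Finset.sum_comm]
    refine Finset.sum_congr rfl fun x _ => ?_
    rw [← Finset.sum_mul]
    simp only [qR]; ring
  rw [h3]
  simp only [dR, qR]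
  ring

/-- second bound -/
lemma bound_two (hG : G.CliqueFree 4) (L : ℝ)
    (hL : ∀ s : V → ℝ, (∀ x, s x = 1 ∨ s x = -1 ∨ s x = 0) → L ≤ qf G s) :
    (Fintype.card V : ℝ) * L ≤ ∑ x, dR G x ^ 2 - 3 * ∑ v, ∑ x, adjR G v x * qR G v x := by
  have h1 : ∀ v, L ≤ dR G v ^ 2 - 3 * ∑ x, adjR G v x * qR G v x := by
    intro v
    have hnn : ∀ x y, 0 ≤ adjR G x y := fun x y => by
      rcases adjR_zero_or_one G x y with h | h <;> simp [h]
    have hd : 0 ≤ dR G v := Finset.sum_nonneg fun x _ => hnn v x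
    rcases hd.eq_or_lt with h0 | hpos
    · have hz : ∀ x, adjR G v x = 0 := by
        intro x
        have := (Finset.sum_eq_zero_iff_of_nonneg fun x (_ : x ∈ Finset.univ) => hnn v x).1 h0.symm
        exact this x (Finset.mem_univ x)
      have := hL (fun _ => 0) (by simp)
      simpa [← h0, hz, qf] using this
    · have e1 := bound_two_aux G hG v
      have e2 : dR G v * L ≤ ∑ u, adjR G u v * qf G (fun x => adjR G v x * (2 * adjR G u x - 1)) := by
        have : dR G v = ∑ u, adjR G u v := Finset.sum_congr rfl fun y _ => adjR_symm G v y
        rw [this, Finset.sum_mul]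
        refine Finset.sum_le_sum fun u _ => mul_le_mul_of_nonneg_left ?_ (hnn u v)
        apply hL
        intro x
        rcases adjR_zero_or_one G v x with h | h <;>
        rcases adjR_zero_or_one G u x with h' | h' <;> simp [h, h']
        left; norm_num
      have e3 : 0 ≤ ∑ x, adjR G v x * (2 * qR G v x - dR G v) ^ 2 :=
        Finset.sum_nonneg fun x _ => mul_nonneg (hnn v x) (sq_nonneg _)
      have e4 : ∑ x, adjR G v x * (2 * qR G v x - dR G v) ^ 2 =
          4 * ∑ x, adjR G v x * qR G v x ^ 2 - 4 * dR G v * ∑ x, adjR G v x * qR G v x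
          + dR G v ^ 2 * dR G v := by
        conv_rhs => rw [show dR G v ^ 2 * dR G v = dR G v ^ 2 * ∑ x, adjR G v x from rfl]
        simp only [Finset.mul_sum, ← Finset.sum_sub_distrib, ← Finset.sum_add_distrib]
        exact Finset.sum_congr rfl fun x _ => by ring
      have e5 : dR G v * L ≤ dR G v * (dR G v ^ 2 - 3 * ∑ x, adjR G v x * qR G v x) := by
        nlinarith
      exact le_of_mul_le_mul_left e5 hpos
  have h2 := Finset.sum_le_sum fun v (_ : v ∈ Finset.univ) => h1 v
  simpa [Finset.sum_sub_distrib, ← Finset.mul_sum] using h2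

/-- third bound, for one triangle -/
lemma bound_three (hG : G.CliqueFree 4) (L : ℝ)
    (hL : ∀ s : V → ℝ, (∀ x, s x = 1 ∨ s x = -1 ∨ s x = 0) → L ≤ qf G s)
    (u v w : V) (huv : G.Adj u v) (hvw : G.Adj v w) (huw : G.Adj u w) :
    0 ≤ (Fintype.card V : ℝ) - qR G u v - qR G v w - qR G u w ∧
    3 * L + ∑ x, dR G x ≤ 4 * ((Fintype.card V : ℝ) - qR G u v - qR G v w - qR G u w) ^ 2 := by
  let A : V → ℝ := fun x => adjR G v x * adjR G w x
  let B : V → ℝ := fun x => adjR G u x * adjR G w x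
  let C : V → ℝ := fun x => adjR G u x * adjR G v x
  let R : V → ℝ := fun x => 1 - C x - A x - B x
  have hR : (Fintype.card V : ℝ) - qR G u v - qR G v w - qR G u w = ∑ x, R x := by
    simp [R, A, B, C, Finset.sum_sub_distrib, qR]
  have K := no_k4 G hG
  have hcl : ∀ x, (A x = 1 ∧ B x = 0 ∧ C x = 0 ∧ G.Adj v x ∧ G.Adj w x) ∨
      (A x = 0 ∧ B x = 1 ∧ C x = 0 ∧ G.Adj u x ∧ G.Adj w x) ∨
      (A x = 0 ∧ B x = 0 ∧ C x = 1 ∧ G.Adj u x ∧ G.Adj v x) ∨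
      (A x = 0 ∧ B x = 0 ∧ C x = 0) := by
    intro x
    have := K u v w x huv huw
    by_cases h1 : G.Adj u x <;> by_cases h2 : G.Adj v x <;> by_cases h3 : G.Adj w x <;>
      simp [A, B, C, adjR, h1, h2, h3]
    exact this h1 hvw h2 h3
  have hRnn : ∀ x, 0 ≤ R x := by
    intro x
    rcases hcl x with ⟨h1, h2, h3, _⟩ | ⟨h1, h2, h3, _⟩ | ⟨h1, h2, h3, _⟩ | ⟨h1, h2, h3⟩ <;>
      simp [R, h1, h2, h3]
  rw [hR]
  refine ⟨Finset.sum_nonneg fun x _ => hRnn x, ?_⟩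
  have sg : ∀ x, (1 - 2 * (B x + C x) = 1 ∨ 1 - 2 * (B x + C x) = -1) ∧
      (1 - 2 * (A x + C x) = 1 ∨ 1 - 2 * (A x + C x) = -1) ∧
      (1 - 2 * (A x + B x) = 1 ∨ 1 - 2 * (A x + B x) = -1) := by
    intro x
    rcases hcl x with ⟨h1, h2, h3, _⟩ | ⟨h1, h2, h3, _⟩ | ⟨h1, h2, h3, _⟩ | ⟨h1, h2, h3⟩ <;>
      simp [h1, h2, h3] <;> norm_num
  have l1 := hL (fun x => 1 - 2 * (B x + C x)) fun x => (sg x).1.imp_right Or.inl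
  have l2 := hL (fun x => 1 - 2 * (A x + C x)) fun x => (sg x).2.1.imp_right Or.inl
  have l3 := hL (fun x => 1 - 2 * (A x + B x)) fun x => (sg x).2.2.imp_right Or.inl
  have tot : qf G (fun x => 1 - 2 * (B x + C x)) + qf G (fun x => 1 - 2 * (A x + C x))
      + qf G (fun x => 1 - 2 * (A x + B x)) ≤ 4 * (∑ x, R x) ^ 2 - ∑ x, dR G x := by
    rw [sq, Finset.sum_mul_sum]
    simp only [qf, dR, Finset.mul_sum, ← Finset.sum_sub_distrib, ← Finset.sum_add_distrib]
    refine Finset.sum_le_sum fun x _ => Finset.sum_le_sum fun y _ => ?_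
    have nn := mul_nonneg (hRnn x) (hRnn y)
    by_cases hxy : G.Adj x y
    · have hone : adjR G x y = 1 := by simp [adjR, hxy]
      rw [hone]
      have kA : G.Adj v x → G.Adj w x → G.Adj v y → G.Adj w y → False :=
        fun a b c d => K v w x y hvw a c b d hxy
      have kB : G.Adj u x → G.Adj w x → G.Adj u y → G.Adj w y → False :=
        fun a b c d => K u w x y huw a c b d hxy
      have kC : G.Adj u x → G.Adj v x → G.Adj u y → G.Adj v y → False :=
        fun a b c d => K u v x y huv a c b d hxy
      rcases hcl x with ⟨h1, h2, h3, h4, h5⟩ | ⟨h1, h2, h3, h4, h5⟩ | ⟨h1, h2, h3, h4, h5⟩ |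
        ⟨h1, h2, h3⟩ <;>
      rcases hcl y with ⟨g1, g2, g3, g4, g5⟩ | ⟨g1, g2, g3, g4, g5⟩ | ⟨g1, g2, g3, g4, g5⟩ |
        ⟨g1, g2, g3⟩ <;>
      first
      | exact (kA h4 h5 g4 g5).elim
      | exact (kB h4 h5 g4 g5).elim
      | exact (kC h4 h5 g4 g5).elim
      | (simp only [R, h1, h2, h3, g1, g2, g3]; norm_num)
    · have hz : adjR G x y = 0 := by simp [adjR, hxy]
      rw [hz]; linarith
  linarith

/-- choice of a good triangle -/
lemma exists_triangle (hpos : 0 < ∑ v, ∑ x, adjR G v x * qR G v x) :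
    ∃ u v w, G.Adj u v ∧ G.Adj v w ∧ G.Adj u w ∧
      3 * ∑ v, ∑ x, adjR G v x * qR G v x ≤
        (∑ x, dR G x) * (qR G u v + qR G v w + qR G u w) := by
  set T := ∑ v, ∑ x, adjR G v x * qR G v x with hT
  set M := ∑ x, dR G x with hM
  by_contra hcon
  push Not at hcon
  let t : V → V → V → ℝ := fun u v w => adjR G u v * (adjR G u w * adjR G v w)
  have hqs : ∀ x y, qR G x y = qR G y x := fun x y =>
    Finset.sum_congr rfl fun z _ => mul_comm _ _
  have hT' : ∑ u, ∑ v, ∑ w, t u v w = T := by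
    simp only [t, hT, qR, Finset.mul_sum]
  have hnn : ∀ x y, 0 ≤ adjR G x y := fun x y => by
    rcases adjR_zero_or_one G x y with h | h <;> simp [h]
  set W := ∑ u, ∑ v, adjR G u v * qR G u v ^ 2 with hW
  have w1 : ∑ u, ∑ v, ∑ w, t u v w * qR G u v = W := by
    refine Finset.sum_congr rfl fun u _ => Finset.sum_congr rfl fun v _ => ?_
    rw [← Finset.sum_mul, sq, ← mul_assoc]
    congr 1
    simp only [t, qR, Finset.mul_sum]
  have w2 : ∑ u, ∑ v, ∑ w, t u v w * qR G u w = W := by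
    rw [← w1]
    refine Finset.sum_congr rfl fun u _ => ?_
    rw [Finset.sum_comm]
    refine Finset.sum_congr rfl fun v _ => Finset.sum_congr rfl fun w _ => ?_
    simp only [t]; rw [adjR_symm G w v]; ring
  have w3 : ∑ u, ∑ v, ∑ w, t u v w * qR G v w = W := by
    rw [← w2, Finset.sum_comm]
    refine Finset.sum_congr rfl fun u _ => Finset.sum_congr rfl fun v _ =>
      Finset.sum_congr rfl fun w _ => ?_
    simp only [t]; rw [adjR_symm G v u]; ring
  have hM' : M = ∑ u, ∑ v, adjR G u v := rfl
  -- Cauchy-Schwarz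
  have cs : T ^ 2 ≤ M * W := by
    have hq : 0 ≤ ∑ u, ∑ v, adjR G u v * (M * qR G u v - T) ^ 2 :=
      Finset.sum_nonneg fun u _ => Finset.sum_nonneg fun v _ =>
        mul_nonneg (hnn u v) (sq_nonneg _)
    have he : ∑ u, ∑ v, adjR G u v * (M * qR G u v - T) ^ 2 =
        M ^ 2 * W - 2 * M * T * T + T ^ 2 * M := by
      conv_rhs => rw [hW]
      have e2 : 2 * M * T * T = 2 * M * T * ∑ v, ∑ x, adjR G v x * qR G v x := rfl
      have e3 : T ^ 2 * M = T ^ 2 * ∑ u, ∑ v, adjR G u v := rfl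
      rw [e2, e3]
      simp only [Finset.mul_sum, ← Finset.sum_sub_distrib, ← Finset.sum_add_distrib]
      exact Finset.sum_congr rfl fun u _ => Finset.sum_congr rfl fun v _ => by ring
    have hM0 : 0 ≤ M := Finset.sum_nonneg fun u _ => Finset.sum_nonneg fun v _ => hnn u v
    rcases hM0.eq_or_lt with h0 | hp
    · exfalso
      have hz : ∀ u v, adjR G u v = 0 := by
        intro u v
        have h1 := (Finset.sum_eq_zero_iff_of_nonneg fun x (_ : x ∈ Finset.univ) =>
          Finset.sum_nonneg fun y (_ : y ∈ Finset.univ) => hnn x y).1 (hM'.symm.trans h0.symm) u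
            (Finset.mem_univ u)
        exact (Finset.sum_eq_zero_iff_of_nonneg fun x (_ : x ∈ Finset.univ) => hnn u x).1 h1 v
          (Finset.mem_univ v)
      have : T = 0 := by simp [hT, hz]
      linarith
    · have : 0 ≤ M * (M * W - T ^ 2) := by nlinarith
      have := nonneg_of_mul_nonneg_right this hp
      linarith
  have tot : ∑ u, ∑ v, ∑ w, t u v w * (M * (qR G u v + qR G v w + qR G u w) - 3 * T)
      = 3 * M * W - 3 * T * T := by
    have : 3 * M * W - 3 * T * T = M * (∑ u, ∑ v, ∑ w, t u v w * qR G u v)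
        + M * (∑ u, ∑ v, ∑ w, t u v w * qR G v w) + M * (∑ u, ∑ v, ∑ w, t u v w * qR G u w)
        - 3 * T * (∑ u, ∑ v, ∑ w, t u v w) := by
      rw [w1, w2, w3, hT']; ring
    rw [this]
    simp only [Finset.mul_sum, ← Finset.sum_sub_distrib, ← Finset.sum_add_distrib]
    exact Finset.sum_congr rfl fun u _ => Finset.sum_congr rfl fun v _ =>
      Finset.sum_congr rfl fun w _ => by ring
  have term : ∀ u v w, t u v w * (M * (qR G u v + qR G v w + qR G u w) - 3 * T) ≤ 0 ∧
      (t u v w ≠ 0 → t u v w * (M * (qR G u v + qR G v w + qR G u w) - 3 * T) < 0) := by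
    intro u v w
    by_cases h : G.Adj u v ∧ G.Adj v w ∧ G.Adj u w
    · have := hcon u v w h.1 h.2.1 h.2.2
      have ht : t u v w = 1 := by simp [t, adjR, h.1, h.2.1, h.2.2]
      rw [ht]
      constructor
      · linarith
      · intro _; linarith
    · have ht : t u v w = 0 := by
        simp only [t, adjR]
        by_cases h1 : G.Adj u v <;> by_cases h2 : G.Adj v w <;> by_cases h3 : G.Adj u w <;>
          simp_all
      simp [ht]
  have allz : ∀ u v w, t u v w = 0 := by
    intro u v w
    by_contra hne
    have hlt := (term u v w).2 hne
    have s1 : ∑ w, t u v w * (M * (qR G u v + qR G v w + qR G u w) - 3 * T) < 0 :=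
      Finset.sum_neg' (fun i _ => (term u v i).1) ⟨w, Finset.mem_univ w, hlt⟩
    have s2 : ∑ v, ∑ w, t u v w * (M * (qR G u v + qR G v w + qR G u w) - 3 * T) < 0 :=
      Finset.sum_neg' (fun i _ => Finset.sum_nonpos fun j _ => (term u i j).1)
        ⟨v, Finset.mem_univ v, s1⟩
    have s3 : ∑ u, ∑ v, ∑ w, t u v w * (M * (qR G u v + qR G v w + qR G u w) - 3 * T) < 0 :=
      Finset.sum_neg' (fun i _ => Finset.sum_nonpos fun j _ => Finset.sum_nonpos fun k _ =>
        (term i j k).1) ⟨u, Finset.mem_univ u, s2⟩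
    rw [tot] at s3
    nlinarith
  have : T = 0 := by rw [← hT']; simp [allz]
  linarith

/-- numerical conclusion -/
lemma numeric (N M S T L s : ℝ) (hN : 0 < N) (b1 : N * L ≤ N * M - 4 * S + 4 * T)
    (b2 : N * L ≤ S - 3 * T) (cs : M ^ 2 ≤ N * S) (hL : 4 * N ^ 2 / 9 - M ≤ L)
    (h3 : 0 < T → 0 ≤ s ∧ 3 * L + M ≤ 4 * s ^ 2 ∧ 3 * T ≤ M * (N - s)) :
    3 * M = 2 * N ^ 2 := by
  have hNL : N ^ 2 * (4 * N ^ 2 / 9 - M) ≤ N * (N * L) := by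
    have := mul_le_mul_of_nonneg_left hL (sq_nonneg N)
    linarith
  have c1 := mul_le_mul_of_nonneg_left b1 hN.le
  have c2 := mul_le_mul_of_nonneg_left b2 hN.le
  have quad : (M - 2 / 3 * N ^ 2) * (M - 7 / 12 * N ^ 2) ≤ 0 := by nlinarith
  have hN2 : 0 < N ^ 2 := by positivity
  have hM2 : M ≤ 2 / 3 * N ^ 2 := by
    by_contra hc
    push Not at hc
    have := mul_pos (sub_pos.2 hc) (show 0 < M - 7 / 12 * N ^ 2 by linarith)
    linarith
  have hM1 : 7 / 12 * N ^ 2 ≤ M := by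
    by_contra hc
    push Not at hc
    have := mul_pos (show 0 < 2 / 3 * N ^ 2 - M by linarith) (sub_pos.2 hc)
    nlinarith
  have hMpos : 0 < M := by linarith
  have hNT : 4 * N ^ 4 / 9 - 2 * N ^ 2 * M + 4 * M ^ 2 ≤ 4 * (N * T) := by nlinarith
  have hT : 0 < T := by
    have h1 : 0 < 4 * N ^ 4 / 9 - 2 * N ^ 2 * M + 4 * M ^ 2 := by
      nlinarith [sq_nonneg (2 * M - N ^ 2 / 2), mul_pos hN2 hN2]
    have h2 : 0 < N * T := by linarith
    exact pos_of_mul_pos_right h2 hN.le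
  obtain ⟨hs, h4, h5⟩ := h3 hT
  have c5 := mul_le_mul_of_nonneg_left h5 hN.le
  set Z := N ^ 2 - 3 * M / 2 with hZ
  have hZ0 : 0 ≤ Z := by linarith
  have hMs : M * (N * s) ≤ M * (3 / 2 * Z) := by
    have : M * (N * s) ≤ - N ^ 4 / 3 + 5 / 2 * N ^ 2 * M - 3 * M ^ 2 := by linarith
    have e : - N ^ 4 / 3 + 5 / 2 * N ^ 2 * M - 3 * M ^ 2 = (2 * M - N ^ 2 / 3) * Z := by
      rw [hZ]; ring
    have : (2 * M - N ^ 2 / 3) * Z ≤ (3 / 2 * M) * Z :=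
      mul_le_mul_of_nonneg_right (by linarith) hZ0
    linarith
  have hNs : N * s ≤ 3 / 2 * Z := le_of_mul_le_mul_left hMs hMpos
  have hsq : (N * s) ^ 2 ≤ (3 / 2 * Z) ^ 2 :=
    pow_le_pow_left₀ (mul_nonneg hN.le hs) hNs 2
  have h6 : 4 / 3 * Z ≤ 4 * s ^ 2 := by linarith
  have c6 := mul_le_mul_of_nonneg_left h6 hN2.le
  have h7 : Z * (4 / 3 * N ^ 2 - 9 * Z) ≤ 0 := by nlinarith
  have h8 : 0 < 4 / 3 * N ^ 2 - 9 * Z := by linarith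
  have h9 : Z ≤ 0 := by
    by_contra hc
    push Not at hc
    have := mul_pos hc h8
    linarith
  linarith

/-- the edge count of an extremal graph -/
lemma edges_eq (hG : G.CliqueFree 4)
    (h : ((Fintype.card V : ℝ) ^ 2 / 9) ≤ (G.edgeFinset.card : ℝ) - G.maxCut) :
    3 * G.edgeFinset.card = Fintype.card V ^ 2 := by
  rcases Nat.eq_zero_or_pos (Fintype.card V) with h0 | hpos
  · have : IsEmpty V := Fintype.card_eq_zero_iff.1 h0
    have he : G.edgeFinset.card = 0 := by
      have := G.card_edgeFinset_le_card_choose_two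
      rw [h0] at this
      simpa using this
    rw [he, h0]; rfl
  have hL := qf_sign_zero G
  have hM : ∑ x, dR G x = 2 * (G.edgeFinset.card : ℝ) := sum_adjR G
  have hN : (0 : ℝ) < Fintype.card V := by exact_mod_cast hpos
  have b1 := bound_one G _ hL
  have b2 := bound_two G hG _ hL
  have cs : (∑ x, dR G x) ^ 2 ≤ (Fintype.card V : ℝ) * ∑ x, dR G x ^ 2 := by
    simpa using sq_sum_le_card_mul_sum_sq (s := (Finset.univ : Finset V)) (f := dR G)
  have key : 3 * ∑ x, dR G x = 2 * (Fintype.card V : ℝ) ^ 2 := by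
    by_cases hT : 0 < ∑ v, ∑ x, adjR G v x * qR G v x
    · obtain ⟨u, v, w, h1, h2, h3, h4⟩ := exists_triangle G hT
      obtain ⟨h5, h6⟩ := bound_three G hG _ hL u v w h1 h2 h3
      refine numeric _ _ _ _ _ _ hN b1 b2 cs ?_ fun _ => ⟨h5, h6, ?_⟩
      · rw [hM]; linarith
      · refine h4.trans (le_of_eq ?_); ring
    · refine numeric _ _ _ _ _ 0 hN b1 b2 cs ?_ fun h => absurd h hT
      rw [hM]; linarith
  rw [hM] at key
  have : 3 * (G.edgeFinset.card : ℝ) = (Fintype.card V : ℝ) ^ 2 := by linarith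
  exact_mod_cast this

lemma final (hG : G.CliqueFree 4) (he : 3 * G.edgeFinset.card = Fintype.card V ^ 2) :
    3 ∣ Fintype.card V ∧
      ∃ f : V → Fin 3,
        (∀ i : Fin 3, (Finset.univ.filter fun v => f v = i).card = Fintype.card V / 3) ∧
        (∀ u v : V, G.Adj u v ↔ f u ≠ f v) := by
  have hd : 3 ∣ Fintype.card V := Nat.prime_three.dvd_of_dvd_pow ⟨_, he.symm⟩
  refine ⟨hd, ?_⟩
  have hmax : G.IsTuranMaximal 3 := by
    refine ⟨hG, ?_⟩
    intro H _ hH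
    have := SimpleGraph.CliqueFree.card_edgeFinset_le (r := 3) hH
    have hm : Fintype.card V % 3 = 0 := Nat.mod_eq_zero_of_dvd hd
    simp only [hm] at this
    simp at this
    omega
  obtain ⟨φ⟩ := (SimpleGraph.isTuranMaximal_iff_nonempty_iso_turanGraph (by norm_num)).1 hmax
  refine ⟨fun v => ⟨(φ v : ℕ) % 3, Nat.mod_lt _ (by norm_num)⟩, ?_, ?_⟩
  · intro i
    obtain ⟨k, hk⟩ := hd
    have e1 : (Finset.univ.filter fun v : V =>
        (⟨(φ v : ℕ) % 3, Nat.mod_lt _ (by norm_num)⟩ : Fin 3) = i).card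
        = (Finset.univ : Finset (Fin k)).card := by
      symm
      refine Finset.card_bij (fun j _ => φ.symm ⟨3 * (j : ℕ) + i, by have := j.2; have := i.2; omega⟩)
        ?_ ?_ ?_
      · intro j _
        have := i.2
        simp [Fin.ext_iff]
      · intro a _ b _ hab
        have := φ.symm.injective hab
        simp [Fin.ext_iff] at this
        exact Fin.ext this
      · intro v hv
        simp [Fin.ext_iff] at hv
        have := (φ v).2
        refine ⟨⟨(φ v : ℕ) / 3, by omega⟩, Finset.mem_univ _, ?_⟩
        apply φ.injective
        simp [Fin.ext_iff]
        omega
    rw [e1, Finset.card_univ, Fintype.card_fin, hk]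
    omega
  · intro u v
    rw [← φ.map_adj_iff, SimpleGraph.turanGraph_adj]
    simp [Fin.ext_iff]

end

/-- If a `K₄`-free graph `G` on `n` vertices satisfies `e(G) - b(G) ≥ n² / 9`,
then `3 ∣ n` and `G` is the complete 3-partite graph with parts of size `n / 3`. -/
theorem K4_free_max_cut_extremal {V : Type*} [Fintype V] [DecidableEq V]
    (G : SimpleGraph V) [DecidableRel G.Adj] (hG : G.CliqueFree 4)
    (h : ((Fintype.card V : ℝ) ^ 2 / 9) ≤ (G.edgeFinset.card : ℝ) - G.maxCut) :
    3 ∣ Fintype.card V ∧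
      ∃ f : V → Fin 3,
        (∀ i : Fin 3, (Finset.univ.filter fun v => f v = i).card = Fintype.card V / 3) ∧
        (∀ u v : V, G.Adj u v ↔ f u ≠ f v) := by
  exact final G hG (edges_eq G hG h)
end

section
/- Let H be a fixed graph with chromatic number χ(H) = 4. For every ε > 0 there exists N such that every graph G on n ≥ N vertices that contains no copy of H as a subgraph can be made bipartite by deleting at most (1/9 + ε)n^2 edges; that is, e(G) - b(G) ≤ (1/9 + ε)n^2. -/
open Finset

namespace MaxCutAux

/-- A quadratic form with zero diagonal attains its minimum over the cube at a sign vector. -/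
lemma round_aux {V : Type*} [Fintype V] [DecidableEq V] (A : V → V → ℝ)
    (hd : ∀ v, A v v = 0) (m : ℝ)
    (h : ∀ s : V → ℝ, (∀ v, s v = 1 ∨ s v = -1) → m ≤ ∑ w, ∑ z, A w z * (s w * s z))
    (T : Finset V) :
    ∀ y : V → ℝ, (∀ v, -1 ≤ y v ∧ y v ≤ 1) → (∀ v, v ∉ T → y v = 1 ∨ y v = -1) →
      m ≤ ∑ w, ∑ z, A w z * (y w * y z) := by
  induction T using Finset.induction_on with
  | empty => intro y _ h2; exact h y (fun v => h2 v (by simp))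
  | insert a T ha ih =>
    intro y h1 h2
    have key : ∀ t : ℝ, (t = 1 ∨ t = -1) →
        m ≤ ∑ w, ∑ z, A w z * (Function.update y a t w * Function.update y a t z) := by
      intro t ht
      apply ih
      · intro v
        by_cases hv : v = a
        · subst hv; rcases ht with rfl | rfl <;> simp
        · simpa [hv] using h1 v
      · intro v hv
        by_cases hva : v = a
        · subst hva; simpa using ht
        · simpa [hva] using h2 v (by simp [hva, hv])
    have k1 := key 1 (Or.inl rfl)
    have k2 := key (-1) (Or.inr rfl)
    have e : ∑ w, ∑ z, A w z * (y w * y z) =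
        (1 + y a) / 2 * (∑ w, ∑ z, A w z * (Function.update y a 1 w * Function.update y a 1 z))
        + (1 - y a) / 2 *
          (∑ w, ∑ z, A w z * (Function.update y a (-1) w * Function.update y a (-1) z)) := by
      simp only [Finset.mul_sum, ← Finset.sum_add_distrib]
      refine Finset.sum_congr rfl fun w _ => Finset.sum_congr rfl fun z _ => ?_
      by_cases hw : w = a <;> by_cases hz : z = a
      · subst hw; subst hz; simp [hd]
      · subst hw; simp [hz]; ring
      · subst hz; simp [hw]; ring
      · simp [hw, hz]; ring
    rw [e]
    have := h1 a
    nlinarith [mul_nonneg (by linarith : 0 ≤ (1 + y a) / 2) (sub_nonneg.2 k1),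
      mul_nonneg (by linarith : 0 ≤ (1 - y a) / 2) (sub_nonneg.2 k2)]

section Cert
variable {V : Type*} [Fintype V]

lemma sw1 (g : V → V → V → V → ℝ) :
    ∑ u, ∑ v, ∑ w, ∑ z, g u v w z = ∑ u, ∑ v, ∑ w, ∑ z, g v u w z :=
  Finset.sum_comm

lemma sw2 (g : V → V → V → V → ℝ) :
    ∑ u, ∑ v, ∑ w, ∑ z, g u v w z = ∑ u, ∑ v, ∑ w, ∑ z, g u w v z :=
  Finset.sum_congr rfl fun _ _ => Finset.sum_comm

lemma sw3 (g : V → V → V → V → ℝ) :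
    ∑ u, ∑ v, ∑ w, ∑ z, g u v w z = ∑ u, ∑ v, ∑ w, ∑ z, g u v z w :=
  Finset.sum_congr rfl fun _ _ => Finset.sum_congr rfl fun _ _ => Finset.sum_comm

/-- Fractional side of a vertex for the first cut. -/
noncomputable def yb (a b : ℝ) : ℝ := -a + (1 - a) * (3 / 4 + b / 4)

/-- Side of a vertex for the second cut. -/
def ya (a b : ℝ) : ℝ := -((1 - 2 * a) * (1 - 2 * b))

/-- Linear form that is squared. -/
def lf (a b : ℝ) : ℝ := 2 + 3 * a + 3 * b - 18 * (a * b)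

/-- The flag polynomial. -/
noncomputable def fp (a12 a13 a14 a23 a24 a34 : ℝ) : ℝ :=
  30 * (a12 * (a34 * ((1 + yb a13 a23 * yb a14 a24) / 2) - 2 / 9))
  + 6 * (a12 * (a34 * ((1 + ya a13 a23 * ya a14 a24) / 2) - 2 / 9))
  + (1 / 5) * (a12 * (lf a13 a23 * lf a14 a24))
  + (12 - 9 * a12) * ((a13 - a23) * (a14 - a24))

lemma fp_sym (a12 a13 a14 a23 a24 a34 : ℝ)
    (h12 : a12 = 0 ∨ a12 = 1) (h13 : a13 = 0 ∨ a13 = 1) (h14 : a14 = 0 ∨ a14 = 1)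
    (h23 : a23 = 0 ∨ a23 = 1) (h24 : a24 = 0 ∨ a24 = 1) (h34 : a34 = 0 ∨ a34 = 1) :
    fp a12 a13 a14 a23 a24 a34 + fp a12 a23 a24 a13 a14 a34
    + fp a13 a12 a14 a23 a34 a24 + fp a13 a23 a34 a12 a14 a24
    + fp a14 a13 a12 a34 a24 a23 + fp a14 a34 a24 a13 a12 a23
    + fp a23 a12 a24 a13 a34 a14 + fp a23 a13 a34 a12 a24 a14
    + fp a24 a23 a12 a34 a14 a13 + fp a24 a34 a14 a23 a12 a13
    + fp a34 a13 a23 a14 a24 a12 + fp a34 a14 a24 a13 a23 a12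
    ≤ 576 * (a12 * a13 * a14 * a23 * a24 * a34) := by
  rcases h12 with rfl | rfl <;> rcases h13 with rfl | rfl <;> rcases h14 with rfl | rfl <;>
  rcases h23 with rfl | rfl <;> rcases h24 with rfl | rfl <;> rcases h34 with rfl | rfl <;>
  norm_num [fp, yb, ya, lf]

lemma fp_sum_le (A : V → V → ℝ) (hs : ∀ u v, A u v = A v u) (h01 : ∀ u v, A u v = 0 ∨ A u v = 1) :
    ∑ u, ∑ v, ∑ w, ∑ z, fp (A u v) (A u w) (A u z) (A v w) (A v z) (A w z) ≤
    48 * ∑ u, ∑ v, ∑ w, ∑ z, (A u v * A u w * A u z * A v w * A v z * A w z) := by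
  set g : V → V → V → V → ℝ :=
    fun u v w z => fp (A u v) (A u w) (A u z) (A v w) (A v z) (A w z) with hg
  set S := ∑ u, ∑ v, ∑ w, ∑ z, g u v w z with hS
  have e1 : S = ∑ u, ∑ v, ∑ w, ∑ z, g v u w z := sw1 g
  have e2 : S = ∑ u, ∑ v, ∑ w, ∑ z, g u w v z := sw2 g
  have e3 : S = ∑ u, ∑ v, ∑ w, ∑ z, g w u v z := e1.trans (sw2 fun u v w z => g v u w z)
  have e4 : S = ∑ u, ∑ v, ∑ w, ∑ z, g v w u z := e2.trans (sw1 fun u v w z => g u w v z)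
  have e5 : S = ∑ u, ∑ v, ∑ w, ∑ z, g w v u z := e3.trans (sw1 fun u v w z => g w u v z)
  have f1 : S = ∑ u, ∑ v, ∑ w, ∑ z, g u z w v :=
    (e2.trans (sw3 fun u v w z => g u w v z)).trans (sw2 fun u v w z => g u z v w)
  have f2 : S = ∑ u, ∑ v, ∑ w, ∑ z, g z u w v :=
    (e3.trans (sw3 fun u v w z => g w u v z)).trans (sw2 fun u v w z => g z u v w)
  have f3 : S = ∑ u, ∑ v, ∑ w, ∑ z, g v z w u := f1.trans (sw1 fun u v w z => g u z w v)
  have f4 : S = ∑ u, ∑ v, ∑ w, ∑ z, g z v w u := f2.trans (sw1 fun u v w z => g z u w v)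
  have f5 : S = ∑ u, ∑ v, ∑ w, ∑ z, g w z u v :=
    (f3.trans (sw2 fun u v w z => g v z w u)).trans (sw1 fun u v w z => g w z v u)
  have f6 : S = ∑ u, ∑ v, ∑ w, ∑ z, g z w u v :=
    (f4.trans (sw2 fun u v w z => g z v w u)).trans (sw1 fun u v w z => g z w v u)
  have tot : 12 * S ≤ 576 * ∑ u, ∑ v, ∑ w, ∑ z,
      (A u v * A u w * A u z * A v w * A v z * A w z) := by
    have : 12 * S = S + S + S + S + S + S + S + S + S + S + S + S := by ring
    rw [this]
    nth_rewrite 12 [f6]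
    nth_rewrite 11 [f5]
    nth_rewrite 10 [f4]
    nth_rewrite 9 [f3]
    nth_rewrite 8 [e5]
    nth_rewrite 7 [e4]
    nth_rewrite 6 [f2]
    nth_rewrite 5 [f1]
    nth_rewrite 4 [e3]
    nth_rewrite 3 [e2]
    nth_rewrite 2 [e1]
    rw [hS]
    simp only [Finset.mul_sum, ← Finset.sum_add_distrib]
    refine Finset.sum_le_sum fun u _ => Finset.sum_le_sum fun v _ =>
      Finset.sum_le_sum fun w _ => Finset.sum_le_sum fun z _ => ?_
    have := fp_sym (A u v) (A u w) (A u z) (A v w) (A v z) (A w z)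
      (h01 _ _) (h01 _ _) (h01 _ _) (h01 _ _) (h01 _ _) (h01 _ _)
    simp only [hg]
    rw [hs v u, hs w u, hs z u, hs w v, hs z v, hs z w]
    linarith
  linarith

lemma sum_fp (A : V → V → ℝ) (u v : V) :
    ∑ w, ∑ z, fp (A u v) (A u w) (A u z) (A v w) (A v z) (A w z) =
    30 * (A u v * ((∑ w, ∑ z, A w z + ∑ w, ∑ z, A w z * (yb (A u w) (A v w) * yb (A u z) (A v z))) / 2
      - 2 / 9 * (Fintype.card V : ℝ) ^ 2))
    + 6 * (A u v * ((∑ w, ∑ z, A w z + ∑ w, ∑ z, A w z * (ya (A u w) (A v w) * ya (A u z) (A v z))) / 2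
      - 2 / 9 * (Fintype.card V : ℝ) ^ 2))
    + (1 / 5) * (A u v * (∑ w, lf (A u w) (A v w)) ^ 2)
    + (12 - 9 * A u v) * (∑ w, (A u w - A v w)) ^ 2 := by
  have hc : (Fintype.card V : ℝ) ^ 2 = ∑ _w : V, ∑ _z : V, (1 : ℝ) := by simp [sq]
  rw [hc, sq, sq, Finset.sum_mul_sum, Finset.sum_mul_sum]
  simp only [Finset.mul_sum, Finset.sum_div, ← Finset.sum_add_distrib, ← Finset.sum_sub_distrib]
  refine Finset.sum_congr rfl fun w _ => Finset.sum_congr rfl fun z _ => ?_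
  unfold fp
  ring

/-- The analytic core: few `K₄`'s force a small distance from bipartite. -/
lemma core [DecidableEq V] (A : V → V → ℝ) (hs : ∀ u v, A u v = A v u)
    (h01 : ∀ u v, A u v = 0 ∨ A u v = 1) (hd : ∀ v, A v v = 0) (m : ℝ)
    (h : ∀ s : V → ℝ, (∀ v, s v = 1 ∨ s v = -1) → m ≤ ∑ w, ∑ z, A w z * (s w * s z)) :
    36 * (∑ u, ∑ v, A u v) * ((∑ u, ∑ v, A u v + m) / 2 - 2 / 9 * (Fintype.card V : ℝ) ^ 2) ≤
    48 * ∑ u, ∑ v, ∑ w, ∑ z, (A u v * A u w * A u z * A v w * A v z * A w z) := by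
  refine le_trans ?_ (fp_sum_le A hs h01)
  have hr : ∀ y : V → ℝ, (∀ v, -1 ≤ y v ∧ y v ≤ 1) → m ≤ ∑ w, ∑ z, A w z * (y w * y z) :=
    fun y hy => round_aux A hd m h Finset.univ y hy (by simp)
  rw [mul_assoc, Finset.sum_mul, Finset.mul_sum]
  refine Finset.sum_le_sum fun u _ => ?_
  rw [Finset.sum_mul, Finset.mul_sum]
  refine Finset.sum_le_sum fun v _ => ?_
  rw [sum_fp]
  have h1 := hr (fun w => yb (A u w) (A v w)) (by
    intro w; rcases h01 u w with h | h <;> rcases h01 v w with h' | h' <;>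
      simp only [h, h', yb] <;> norm_num)
  have h2 := hr (fun w => ya (A u w) (A v w)) (by
    intro w; rcases h01 u w with h | h <;> rcases h01 v w with h' | h' <;>
      simp only [h, h', ya] <;> norm_num)
  have h3 := sq_nonneg (∑ w, lf (A u w) (A v w))
  have h4 := sq_nonneg (∑ w, (A u w - A v w))
  rcases h01 u v with h | h
  · rw [h]; linarith
  · rw [h]; linarith

end Cert

section Blowup

/-- One step of finding a blow-up. -/
lemma blow_step (t : ℕ) (c : ℝ) (hc : 0 < c) :
    ∃ c' : ℝ, 0 < c' ∧ ∃ N : ℕ, ∀ {W : Type*} [Fintype W] {X Y : Type} [Fintype X] [Fintype Y]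
      [Nonempty Y]
      (R : X → Y → Prop), Fintype.card W = t → N ≤ Fintype.card X →
      c * (Fintype.card X * Fintype.card Y) ≤ (Nat.card {p : X × Y // R p.1 p.2} : ℝ) →
      ∃ g : W ↪ X, c' * Fintype.card Y ≤ (Nat.card {y : Y // ∀ i, R (g i) y} : ℝ) := by
  classical
  refine ⟨c / 4 * (c / 4) ^ t, by positivity, ⌈4 * t / c⌉₊ + 1, ?_⟩
  intro W _ X Y _ _ _ R hW hX hR
  set n : ℝ := (Fintype.card X : ℝ) with hn
  have hn1 : 4 * t / c ≤ n := by
    refine (Nat.le_ceil _).trans ?_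
    rw [hn]
    exact Nat.cast_le.2 (by omega)
  have hn0 : 0 < n := by rw [hn]; exact_mod_cast (by omega)
  have hn2 : (t : ℝ) ≤ c / 4 * n := by
    rw [div_le_iff₀ hc] at hn1; linarith
  set d : Y → ℕ := fun y => Fintype.card {x // R x y} with hdd
  have hdn : ∀ y, (d y : ℝ) ≤ n := fun y => by
    rw [hn]; exact_mod_cast Fintype.card_subtype_le _
  have hsum : (Nat.card {p : X × Y // R p.1 p.2} : ℝ) = ∑ y, (d y : ℝ) := by
    have e : {p : X × Y // R p.1 p.2} ≃ Σ y : Y, {x : X // R x y} :=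
      { toFun := fun p => ⟨p.1.2, p.1.1, p.2⟩
        invFun := fun q => ⟨(q.2.1, q.1), q.2.2⟩
        left_inv := fun _ => rfl
        right_inv := fun _ => rfl }
    rw [Nat.card_congr e, Nat.card_eq_fintype_card, Fintype.card_sigma]
    push_cast; rfl
  -- number of embeddings
  have hemb : ∀ y, c / 2 * n ≤ d y → (c / 4 * n) ^ t ≤ (Fintype.card (W ↪ {x // R x y}) : ℝ) := by
    intro y hy
    rw [Fintype.card_embedding_eq, hW]
    have h1 : ((d y + 1 - t : ℕ) : ℝ) ^ t ≤ ((d y).descFactorial t : ℝ) := by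
      exact_mod_cast Nat.pow_sub_le_descFactorial (d y) t
    refine le_trans ?_ h1
    have : (t : ℝ) ≤ d y := by nlinarith
    have ht : t ≤ d y := by exact_mod_cast this
    rw [Nat.cast_sub (by omega)]
    push_cast
    gcongr
    linarith
  by_contra hcon
  push Not at hcon
  -- double count
  have dc : ∑ g : W ↪ X, (Nat.card {y : Y // ∀ i, R (g i) y} : ℝ) =
      ∑ y : Y, (Fintype.card (W ↪ {x // R x y}) : ℝ) := by
    have e : (Σ g : W ↪ X, {y : Y // ∀ i, R (g i) y}) ≃ Σ y : Y, (W ↪ {x : X // R x y}) :=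
      { toFun := fun q => ⟨q.2.1, ⟨fun i => ⟨q.1 i, q.2.2 i⟩, fun i j hij => q.1.injective
          (by simpa using hij)⟩⟩
        invFun := fun q => ⟨⟨fun i => (q.2 i).1, fun i j hij => q.2.injective (Subtype.ext hij)⟩,
          ⟨q.1, fun i => (q.2 i).2⟩⟩
        left_inv := fun _ => rfl
        right_inv := fun _ => rfl }
    have := Fintype.card_congr e
    rw [Fintype.card_sigma, Fintype.card_sigma] at this
    simp only [Nat.card_eq_fintype_card]
    exact_mod_cast this
  have hY : 0 < (Fintype.card Y : ℝ) := by exact_mod_cast Fintype.card_pos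
  have up : ∑ g : W ↪ X, (Nat.card {y : Y // ∀ i, R (g i) y} : ℝ) ≤
      n ^ t * (c / 4 * (c / 4) ^ t * Fintype.card Y) := by
    have h1 : ∑ g : W ↪ X, (Nat.card {y : Y // ∀ i, R (g i) y} : ℝ) ≤
        ∑ _g : W ↪ X, (c / 4 * (c / 4) ^ t * Fintype.card Y) :=
      Finset.sum_le_sum fun g _ => (hcon g).le
    refine h1.trans ?_
    rw [Finset.sum_const, nsmul_eq_mul, Finset.card_univ, Fintype.card_embedding_eq, hW]
    gcongr
    rw [hn]
    exact_mod_cast Nat.descFactorial_le_pow _ _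
  set P : Finset Y := Finset.univ.filter fun y => c / 2 * n ≤ d y with hP
  have hPc : c / 2 * Fintype.card Y ≤ (P.card : ℝ) := by
    have h1 : ∑ y, (d y : ℝ) ≤ ∑ y, ((if c / 2 * n ≤ d y then n else 0) + c / 2 * n) := by
      refine Finset.sum_le_sum fun y _ => ?_
      split_ifs with h
      · have := hdn y
        have : 0 ≤ c / 2 * n := by positivity
        linarith
      · linarith
    rw [Finset.sum_add_distrib, ← Finset.sum_filter, Finset.sum_const, Finset.sum_const,
      nsmul_eq_mul, nsmul_eq_mul, Finset.card_univ, ← hP, ← hsum] at h1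
    have h2 := hR.trans h1
    have h3 : (c / 2 * Fintype.card Y) * n ≤ P.card * n := by linarith
    exact le_of_mul_le_mul_right h3 hn0
  have low : c / 2 * Fintype.card Y * (c / 4 * n) ^ t ≤
      ∑ y : Y, (Fintype.card (W ↪ {x // R x y}) : ℝ) := by
    calc c / 2 * Fintype.card Y * (c / 4 * n) ^ t ≤ P.card * (c / 4 * n) ^ t := by gcongr
      _ = ∑ _y ∈ P, (c / 4 * n) ^ t := by simp
      _ ≤ ∑ y ∈ P, (Fintype.card (W ↪ {x // R x y}) : ℝ) :=
        Finset.sum_le_sum fun y hy => hemb y (by simpa [hP] using hy)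
      _ ≤ _ := Finset.sum_le_sum_of_subset_of_nonneg (Finset.subset_univ _)
        fun _ _ _ => by positivity
  rw [dc] at up
  have h5 := low.trans up
  rw [mul_pow] at h5
  have h6 : 0 < (c / 4) ^ t * n ^ t * Fintype.card Y * c := by positivity
  nlinarith

/-- Positive density of `K₄`'s yields a blow-up of `K₄`. -/
lemma blow {W : Type*} [Fintype W] (c : ℝ) (hc : 0 < c) :
    ∃ N : ℕ, ∀ n : ℕ, N ≤ n → ∀ R : Fin n → Fin n → Fin n → Fin n → Prop,
      c * (n : ℝ) ^ 4 ≤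
        (Nat.card {p : Fin n × Fin n × Fin n × Fin n // R p.1 p.2.1 p.2.2.1 p.2.2.2} : ℝ) →
      ∃ g₁ g₂ g₃ g₄ : W ↪ Fin n, ∀ i j k l, R (g₁ i) (g₂ j) (g₃ k) (g₄ l) := by
  obtain ⟨c1, h1, N1, H1⟩ := blow_step (Fintype.card W) c hc
  obtain ⟨c2, h2, N2, H2⟩ := blow_step (Fintype.card W) c1 h1
  obtain ⟨c3, h3, N3, H3⟩ := blow_step (Fintype.card W) c2 h2
  obtain ⟨c4, h4, N4, H4⟩ := blow_step (Fintype.card W) c3 h3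
  refine ⟨N1 + N2 + N3 + N4 + 1, fun n hn R hR => ?_⟩
  have : Nonempty (Fin n) := ⟨⟨0, by omega⟩⟩
  obtain ⟨g1, G1⟩ := H1 (W := W) (X := Fin n) (Y := Fin n × Fin n × Fin n)
    (fun a p => R a p.1 p.2.1 p.2.2) rfl (by simp; omega)
    (by refine le_trans (le_of_eq ?_) hR; simp only [Fintype.card_fin, Fintype.card_prod]; push_cast; ring)
  obtain ⟨g2, G2⟩ := H2 (W := W) (X := Fin n) (Y := Fin n × Fin n)
    (fun a p => ∀ i, R (g1 i) a p.1 p.2) rfl (by simp; omega)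
    (by refine le_trans (le_of_eq ?_) G1; simp)
  obtain ⟨g3, G3⟩ := H3 (W := W) (X := Fin n) (Y := Fin n)
    (fun a p => ∀ j i, R (g1 i) (g2 j) a p) rfl (by simp; omega)
    (by refine le_trans (le_of_eq ?_) G2; simp)
  obtain ⟨g4, G4⟩ := H4 (W := W) (X := Fin n) (Y := Unit)
    (fun a _ => ∀ k j i, R (g1 i) (g2 j) (g3 k) a) rfl (by simp; omega)
    (by
      have e : {p : Fin n × Unit // ∀ k j i, R (g1 i) (g2 j) (g3 k) p.1} ≃
          {p : Fin n // ∀ k j i, R (g1 i) (g2 j) (g3 k) p} :=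
        (Equiv.prodPUnit (Fin n)).subtypeEquiv fun _ => Iff.rfl
      refine le_trans (le_of_eq ?_) (G3.trans (le_of_eq ?_))
      · simp
      · rw [Nat.card_congr e])
  have : 0 < Nat.card {y : Unit // ∀ i, ∀ k j i', R (g1 i') (g2 j) (g3 k) (g4 i)} := by
    have : (0 : ℝ) < Nat.card {y : Unit // ∀ i, ∀ k j i', R (g1 i') (g2 j) (g3 k) (g4 i)} :=
      lt_of_lt_of_le (by simpa using h4) G4
    exact_mod_cast this
  obtain ⟨⟨_, h⟩⟩ := (Nat.card_pos_iff.1 this).1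
  exact ⟨g1, g2, g3, g4, fun i j k l => h l k j i⟩

/-- A graph with a blow-up of `K₄` contains every 4-colourable graph of that size. -/
lemma contains_of_blow {W V : Type*} (H : SimpleGraph W) (G : SimpleGraph V)
    (C : H.Coloring (Fin 4)) (g : Fin 4 → W ↪ V)
    (hg : ∀ i j, i ≠ j → ∀ a b, G.Adj (g i a) (g j b)) :
    ∃ f : W → V, Function.Injective f ∧ ∀ a b : W, H.Adj a b → G.Adj (f a) (f b) := by
  refine ⟨fun a => g (C a) a, fun a b hab => ?_, fun a b hab => hg _ _ (C.valid hab) a b⟩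
  by_cases h : C a = C b
  · simp only [h] at hab
    exact (g (C b)).injective hab
  · exact absurd hab (hg _ _ h a b).ne

end Blowup

section Cut
variable {V : Type*} [Fintype V] [DecidableEq V] (G : SimpleGraph V) [DecidableRel G.Adj]

/-- Real adjacency indicator. -/
def adj (u v : V) : ℝ := if G.Adj u v then 1 else 0

lemma sum_adj : ∑ u, ∑ v, adj G u v = 2 * (G.edgeFinset.card : ℝ) := by
  have h := G.sum_degrees_eq_twice_card_edges
  have : ∀ u, ∑ v, adj G u v = (G.degree u : ℝ) := by
    intro u
    simp [adj, ← SimpleGraph.card_neighborFinset_eq_degree, SimpleGraph.neighborFinset_eq_filter]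
  simp only [this]
  exact_mod_cast h

lemma sum_sign (s : V → ℝ) (hs : ∀ v, s v = 1 ∨ s v = -1) :
    2 * (G.edgeFinset.card : ℝ) - 4 * G.maxCut ≤ ∑ w, ∑ z, adj G w z * (s w * s z) := by
  set S : Finset V := Finset.univ.filter fun v => s v = 1 with hS
  have hmem : ∀ v, v ∈ S ↔ s v = 1 := fun v => by simp [hS]
  have hle : (G.cutSize S : ℝ) ≤ G.maxCut := by
    exact_mod_cast Finset.le_sup (f := fun S : Finset V => G.cutSize S) (Finset.mem_univ S)
  have hcut : (G.cutSize S : ℝ) =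
      ∑ w, ∑ z, (if w ∈ S ∧ z ∉ S then adj G w z else 0) := by
    rw [SimpleGraph.cutSize, ← Fintype.sum_prod_type']
    rw [Finset.card_filter]
    push_cast
    have : S ×ˢ Sᶜ = (Finset.univ : Finset (V × V)).filter fun p => p.1 ∈ S ∧ p.2 ∉ S := by
      ext p; simp
    rw [this, Finset.sum_filter]
    rfl
  have hcut' : (G.cutSize S : ℝ) =
      ∑ w, ∑ z, (if z ∈ S ∧ w ∉ S then adj G w z else 0) := by
    rw [hcut, Finset.sum_comm]
    simp only [adj, G.adj_comm]
  have e : ∑ w, ∑ z, adj G w z * (s w * s z) = ∑ w, ∑ z, adj G w z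
      - 2 * (G.cutSize S : ℝ) - 2 * (G.cutSize S : ℝ) := by
    nth_rewrite 1 [hcut]
    rw [hcut']
    simp only [Finset.mul_sum, ← Finset.sum_sub_distrib]
    refine Finset.sum_congr rfl fun w _ => Finset.sum_congr rfl fun z _ => ?_
    have n1 : (-1 : ℝ) ≠ 1 := by norm_num
    rcases hs w with h | h <;> rcases hs z with h' | h' <;> simp [hmem, h, h', n1] <;> ring
  rw [e, sum_adj]
  linarith

end Cut

end MaxCutAux

/-- If `H` is a fixed graph with chromatic number 4, then for every `ε > 0` there is `N`
such that every `H`-free graph `G` on `n ≥ N` vertices satisfies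
`e(G) - b(G) ≤ (1/9 + ε) n²`. -/
theorem four_chromatic_free_max_cut {W : Type*} [Fintype W] (H : SimpleGraph W)
    (hH : H.chromaticNumber = 4) {ε : ℝ} (hε : 0 < ε) :
    ∃ N : ℕ, ∀ n : ℕ, N ≤ n → ∀ (G : SimpleGraph (Fin n)) [DecidableRel G.Adj],
      (¬ ∃ f : W → Fin n, Function.Injective f ∧ ∀ a b : W, H.Adj a b → G.Adj (f a) (f b)) →
      (G.edgeFinset.card : ℝ) - G.maxCut ≤ (1 / 9 + ε) * (n : ℝ) ^ 2 := by
  classical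
  have hcol : H.Colorable 4 := by
    rw [← SimpleGraph.chromaticNumber_le_iff_colorable, hH]; rfl
  obtain ⟨C⟩ := hcol
  have hWne : Nonempty W := by
    by_contra h
    rw [not_nonempty_iff] at h
    have := SimpleGraph.chromaticNumber_eq_zero_of_isEmpty (G := H)
    rw [hH] at this
    exact absurd this (by norm_num)
  obtain ⟨N, hN⟩ := MaxCutAux.blow (W := W) (ε / 3) (by positivity)
  refine ⟨N + 1, fun n hn G _ hfree => ?_⟩
  by_contra hcon
  push Not at hcon
  apply hfree
  have hn0 : (0 : ℝ) < n := by exact_mod_cast (by omega : 0 < n)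
  set A := MaxCutAux.adj G with hA
  have hcore := MaxCutAux.core A
    (fun u v => by simp [hA, MaxCutAux.adj, G.adj_comm])
    (fun u v => by by_cases h : G.Adj u v <;> simp [hA, MaxCutAux.adj, h])
    (fun v => by simp [hA, MaxCutAux.adj]) _ (MaxCutAux.sum_sign G)
  rw [hA, MaxCutAux.sum_adj, Fintype.card_fin, ← hA] at hcore
  set e : ℝ := (G.edgeFinset.card : ℝ)
  set b : ℝ := (G.maxCut : ℝ) with hb
  have hb0 : 0 ≤ b := by rw [hb]; positivity
  set R : Fin n → Fin n → Fin n → Fin n → Prop := fun u v w z =>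
    G.Adj u v ∧ G.Adj u w ∧ G.Adj u z ∧ G.Adj v w ∧ G.Adj v z ∧ G.Adj w z with hR
  have hK : ∑ u, ∑ v, ∑ w, ∑ z, (A u v * A u w * A u z * A v w * A v z * A w z) =
      (Nat.card {p : Fin n × Fin n × Fin n × Fin n // R p.1 p.2.1 p.2.2.1 p.2.2.2} : ℝ) := by
    rw [Nat.card_eq_fintype_card, Fintype.card_subtype, Finset.card_filter]
    push_cast
    simp only [Fintype.sum_prod_type]
    refine Finset.sum_congr rfl fun u _ => Finset.sum_congr rfl fun v _ =>
      Finset.sum_congr rfl fun w _ => Finset.sum_congr rfl fun z _ => ?_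
    simp only [hA, MaxCutAux.adj, hR]
    by_cases h1 : G.Adj u v <;> by_cases h2 : G.Adj u w <;> by_cases h3 : G.Adj u z <;>
    by_cases h4 : G.Adj v w <;> by_cases h5 : G.Adj v z <;> by_cases h6 : G.Adj w z <;>
    simp [h1, h2, h3, h4, h5, h6]
  rw [hK] at hcore
  have hn2 : 0 < (n : ℝ) ^ 2 := by positivity
  have he : 1 / 9 * (n : ℝ) ^ 2 ≤ e := by nlinarith
  have hx : 2 * ε * (n : ℝ) ^ 2 ≤ (2 * e + (2 * e - 4 * b)) / 2 - 2 / 9 * (n : ℝ) ^ 2 := by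
    linarith
  have hy : 36 * (2 * (1 / 9 * (n : ℝ) ^ 2)) * (2 * ε * (n : ℝ) ^ 2) ≤
      36 * (2 * e) * ((2 * e + (2 * e - 4 * b)) / 2 - 2 / 9 * (n : ℝ) ^ 2) := by
    gcongr
  have hz := hy.trans hcore
  obtain ⟨g1, g2, g3, g4, hg⟩ := hN n (by omega) R (by nlinarith)
  obtain ⟨x⟩ := hWne
  apply MaxCutAux.contains_of_blow H G C ![g1, g2, g3, g4]
  have h12 := fun i j => (hg i j x x).1
  have h13 := fun i k => (hg i x k x).2.1
  have h14 := fun i l => (hg i x x l).2.2.1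
  have h23 := fun j k => (hg x j k x).2.2.2.1
  have h24 := fun j l => (hg x j x l).2.2.2.2.1
  have h34 := fun k l => (hg x x k l).2.2.2.2.2
  intro i j hij a c
  fin_cases i <;> fin_cases j <;> simp at hij ⊢ <;>
  first
    | exact h12 _ _ | exact h13 _ _ | exact h14 _ _ | exact h23 _ _ | exact h24 _ _ | exact h34 _ _
    | exact (h12 _ _).symm | exact (h13 _ _).symm | exact (h14 _ _).symm
    | exact (h23 _ _).symm | exact (h24 _ _).symm | exact (h34 _ _).symm
end
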